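/- Suppose the horizon satisfies N ≥ n and assumptions (A1), (A2), (A3), (A4), (A5) hold. Then for every γ₁ > 0 there exist V_max, J_eq^max > 0 and c_{V,1} ∈ (0,1) such that: for every x_t ∈ ℝⁿ at which the tracking MPC problem is feasible with V(x_t) ≤ V_max and J*_{eq,lin}(x_t) ≤ J_eq^max, if (x̄*, ū*, xˢ*, uˢ*, yˢ*) is an optimal solution at x_t satisfying Σ_{k=0}^{n−1}(‖x̄*_k − xˢ*‖₂² + ‖ū*_k − uˢ*‖₂²) ≥ γ₁‖xˢ* − xˢʳ_lin(x_t)‖₂², and x_{t+n} denotes the state obtained by applying ū*₀, …, ū*_{n−1} to the nonlinear dynamics x_{k+1} = f(x_k, u_k) starting from x_t, and moreover J*_{eq,lin}(x_{t+n}) ≤ J_eq^max, then the tracking MPC problem is feasible at x_{t+n} and V(x_{t+n}) ≤ c_{V,1} · V(x_t). -/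

import Mathlib

open Matrix

noncomputable section

def en {k : ℕ} (x : Fin k → ℝ) : ℝ := Real.sqrt (∑ i, x i ^ 2)

def qn {k : ℕ} (P : Matrix (Fin k) (Fin k) ℝ) (x : Fin k → ℝ) : ℝ :=
  x ⬝ᵥ P.mulVec x

def jac {n q : ℕ} (g : (Fin n → ℝ) → Fin q → ℝ) (xt : Fin n → ℝ) :
    Matrix (Fin q) (Fin n) ℝ :=
  LinearMap.toMatrix' (fderiv ℝ g xt).toLinearMap

def fdyn {n m : ℕ} (f0 : (Fin n → ℝ) → Fin n → ℝ) (B : Matrix (Fin n) (Fin m) ℝ)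
    (x : Fin n → ℝ) (u : Fin m → ℝ) : Fin n → ℝ :=
  f0 x + B.mulVec u

def hout {n p m : ℕ} (h0 : (Fin n → ℝ) → Fin p → ℝ) (D : Matrix (Fin p) (Fin m) ℝ)
    (x : Fin n → ℝ) (u : Fin m → ℝ) : Fin p → ℝ :=
  h0 x + D.mulVec u

def flin {n m : ℕ} (f0 : (Fin n → ℝ) → Fin n → ℝ) (B : Matrix (Fin n) (Fin m) ℝ)
    (xt x : Fin n → ℝ) (u : Fin m → ℝ) : Fin n → ℝ :=
  (jac f0 xt).mulVec x + B.mulVec u + (f0 xt - (jac f0 xt).mulVec xt)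

def hlin {n p m : ℕ} (h0 : (Fin n → ℝ) → Fin p → ℝ) (D : Matrix (Fin p) (Fin m) ℝ)
    (xt x : Fin n → ℝ) (u : Fin m → ℝ) : Fin p → ℝ :=
  (jac h0 xt).mulVec x + D.mulVec u + (h0 xt - (jac h0 xt).mulVec xt)

def Zlin {n m : ℕ} (f0 : (Fin n → ℝ) → Fin n → ℝ) (B : Matrix (Fin n) (Fin m) ℝ)
    (Us : Set (Fin m → ℝ)) (xt : Fin n → ℝ) : Set ((Fin n → ℝ) × (Fin m → ℝ)) :=
  {z | z.2 ∈ Us ∧ z.1 = flin f0 B xt z.1 z.2}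

def Zs {n m : ℕ} (f0 : (Fin n → ℝ) → Fin n → ℝ) (B : Matrix (Fin n) (Fin m) ℝ)
    (Us : Set (Fin m → ℝ)) : Set ((Fin n → ℝ) × (Fin m → ℝ)) :=
  {z | z.2 ∈ Us ∧ z.1 = fdyn f0 B z.1 z.2}

def A2holds {n m p : ℕ} (f0 : (Fin n → ℝ) → Fin n → ℝ) (h0 : (Fin n → ℝ) → Fin p → ℝ)
    (B : Matrix (Fin n) (Fin m) ℝ) (D : Matrix (Fin p) (Fin m) ℝ) (σs : ℝ) : Prop :=
  ∀ (xt v : Fin n → ℝ) (w : Fin m → ℝ),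
    σs * Real.sqrt (en v ^ 2 + en w ^ 2) ≤
      Real.sqrt (en ((jac f0 xt).mulVec v - v + B.mulVec w) ^ 2 +
        en ((jac h0 xt).mulVec v + D.mulVec w) ^ 2)

def A3holds {n m : ℕ} (f0 : (Fin n → ℝ) → Fin n → ℝ) (B : Matrix (Fin n) (Fin m) ℝ)
    (μ : ℝ) : Prop :=
  ∀ (xt w : Fin n → ℝ),
    μ * en w ≤ Real.sqrt (∑ k ∈ Finset.range n, en ((jac f0 xt ^ k * B)ᵀ.mulVec w) ^ 2)

def A4holds {n : ℕ} (f0 : (Fin n → ℝ) → Fin n → ℝ) (σl : ℝ) : Prop :=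
  ∀ xt v : Fin n → ℝ, σl * en v ≤ en (v - (jac f0 xt).mulVec v)
def Jeqlin {n m p : ℕ} (f0 : (Fin n → ℝ) → Fin n → ℝ) (h0 : (Fin n → ℝ) → Fin p → ℝ)
    (B : Matrix (Fin n) (Fin m) ℝ) (D : Matrix (Fin p) (Fin m) ℝ)
    (Us : Set (Fin m → ℝ)) (S : Matrix (Fin p) (Fin p) ℝ) (yr : Fin p → ℝ)
    (xt : Fin n → ℝ) : ℝ :=
  sInf {c : ℝ | ∃ z ∈ Zlin f0 B Us xt, c = qn S (hlin h0 D xt z.1 z.2 - yr)}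

def MPCfeas {n m p : ℕ} (f0 : (Fin n → ℝ) → Fin n → ℝ) (h0 : (Fin n → ℝ) → Fin p → ℝ)
    (B : Matrix (Fin n) (Fin m) ℝ) (D : Matrix (Fin p) (Fin m) ℝ)
    (U Us : Set (Fin m → ℝ)) (N : ℕ) (xt : Fin n → ℝ)
    (xb : ℕ → Fin n → ℝ) (ub : ℕ → Fin m → ℝ)
    (xs : Fin n → ℝ) (us : Fin m → ℝ) (ys : Fin p → ℝ) : Prop :=
  (∀ k < N, xb (k + 1) = flin f0 B xt (xb k) (ub k)) ∧
  xb 0 = xt ∧ xb N = xs ∧ (∀ k < N, ub k ∈ U) ∧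
  (xs, us) ∈ Zlin f0 B Us xt ∧ ys = hlin h0 D xt xs us

def MPCcost {n m p : ℕ} (Q : Matrix (Fin n) (Fin n) ℝ) (R : Matrix (Fin m) (Fin m) ℝ)
    (S : Matrix (Fin p) (Fin p) ℝ) (yr : Fin p → ℝ) (N : ℕ)
    (xb : ℕ → Fin n → ℝ) (ub : ℕ → Fin m → ℝ)
    (xs : Fin n → ℝ) (us : Fin m → ℝ) (ys : Fin p → ℝ) : ℝ :=
  (∑ k ∈ Finset.range N, (qn Q (xb k - xs) + qn R (ub k - us))) + qn S (ys - yr)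

def Jstar {n m p : ℕ} (f0 : (Fin n → ℝ) → Fin n → ℝ) (h0 : (Fin n → ℝ) → Fin p → ℝ)
    (B : Matrix (Fin n) (Fin m) ℝ) (D : Matrix (Fin p) (Fin m) ℝ)
    (U Us : Set (Fin m → ℝ)) (Q : Matrix (Fin n) (Fin n) ℝ) (R : Matrix (Fin m) (Fin m) ℝ)
    (S : Matrix (Fin p) (Fin p) ℝ) (yr : Fin p → ℝ) (N : ℕ) (xt : Fin n → ℝ) : ℝ :=
  sInf {c : ℝ | ∃ xb ub xs us ys, MPCfeas f0 h0 B D U Us N xt xb ub xs us ys ∧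
    c = MPCcost Q R S yr N xb ub xs us ys}

def Vfun {n m p : ℕ} (f0 : (Fin n → ℝ) → Fin n → ℝ) (h0 : (Fin n → ℝ) → Fin p → ℝ)
    (B : Matrix (Fin n) (Fin m) ℝ) (D : Matrix (Fin p) (Fin m) ℝ)
    (U Us : Set (Fin m → ℝ)) (Q : Matrix (Fin n) (Fin n) ℝ) (R : Matrix (Fin m) (Fin m) ℝ)
    (S : Matrix (Fin p) (Fin p) ℝ) (yr : Fin p → ℝ) (N : ℕ) (xt : Fin n → ℝ) : ℝ :=
  Jstar f0 h0 B D U Us Q R S yr N xt - Jeqlin f0 h0 B D Us S yr xt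

def MPCfeasible {n m p : ℕ} (f0 : (Fin n → ℝ) → Fin n → ℝ) (h0 : (Fin n → ℝ) → Fin p → ℝ)
    (B : Matrix (Fin n) (Fin m) ℝ) (D : Matrix (Fin p) (Fin m) ℝ)
    (U Us : Set (Fin m → ℝ)) (N : ℕ) (xt : Fin n → ℝ) : Prop :=
  ∃ xb ub xs us ys, MPCfeas f0 h0 B D U Us N xt xb ub xs us ys

def MPCopt {n m p : ℕ} (f0 : (Fin n → ℝ) → Fin n → ℝ) (h0 : (Fin n → ℝ) → Fin p → ℝ)
    (B : Matrix (Fin n) (Fin m) ℝ) (D : Matrix (Fin p) (Fin m) ℝ)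
    (U Us : Set (Fin m → ℝ)) (Q : Matrix (Fin n) (Fin n) ℝ) (R : Matrix (Fin m) (Fin m) ℝ)
    (S : Matrix (Fin p) (Fin p) ℝ) (yr : Fin p → ℝ) (N : ℕ) (xt : Fin n → ℝ)
    (xb : ℕ → Fin n → ℝ) (ub : ℕ → Fin m → ℝ)
    (xs : Fin n → ℝ) (us : Fin m → ℝ) (ys : Fin p → ℝ) : Prop :=
  MPCfeas f0 h0 B D U Us N xt xb ub xs us ys ∧
  ∀ xb' ub' xs' us' ys', MPCfeas f0 h0 B D U Us N xt xb' ub' xs' us' ys' →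
    MPCcost Q R S yr N xb ub xs us ys ≤ MPCcost Q R S yr N xb' ub' xs' us' ys'

def rollout {n m : ℕ} (f0 : (Fin n → ℝ) → Fin n → ℝ) (B : Matrix (Fin n) (Fin m) ℝ)
    (x0 : Fin n → ℝ) (u : ℕ → Fin m → ℝ) : ℕ → Fin n → ℝ
  | 0 => x0
  | k + 1 => fdyn f0 B (rollout f0 B x0 u k) (u k)

theorem jac_mulVec {n q : ℕ} (g : (Fin n → ℝ) → Fin q → ℝ) (x v : Fin n → ℝ) :
    (jac g x).mulVec v = fderiv ℝ g x v := by
  simp [jac, LinearMap.toMatrix'_mulVec]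

theorem flin_eq {n m : ℕ} (f0 : (Fin n → ℝ) → Fin n → ℝ) (B : Matrix (Fin n) (Fin m) ℝ)
    (xt x : Fin n → ℝ) (u : Fin m → ℝ) :
    flin f0 B xt x u = f0 xt + fderiv ℝ f0 xt (x - xt) + B.mulVec u := by
  simp only [flin, jac_mulVec, map_sub]
  abel

theorem hlin_eq {n p m : ℕ} (h0 : (Fin n → ℝ) → Fin p → ℝ) (D : Matrix (Fin p) (Fin m) ℝ)
    (xt x : Fin n → ℝ) (u : Fin m → ℝ) :
    hlin h0 D xt x u = h0 xt + fderiv ℝ h0 xt (x - xt) + D.mulVec u := by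
  simp only [hlin, jac_mulVec, map_sub]
  abel

theorem en_nonneg {k : ℕ} (x : Fin k → ℝ) : 0 ≤ en x := Real.sqrt_nonneg _

theorem en_sq {k : ℕ} (x : Fin k → ℝ) : en x ^ 2 = ∑ i, x i ^ 2 :=
  Real.sq_sqrt (Finset.sum_nonneg fun _ _ => sq_nonneg _)

theorem en_sq_eq_dotProduct {k : ℕ} (x : Fin k → ℝ) : en x ^ 2 = x ⬝ᵥ x := by
  rw [en_sq]
  simp [dotProduct, sq]

theorem norm_le_en {k : ℕ} (x : Fin k → ℝ) : ‖x‖ ≤ en x := by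
  refine (pi_norm_le_iff_of_nonneg (en_nonneg x)).2 fun i => ?_
  rw [Real.norm_eq_abs]
  refine abs_le_of_sq_le_sq ?_ (en_nonneg x)
  rw [en_sq]
  exact Finset.single_le_sum (f := fun i => x i ^ 2) (fun _ _ => sq_nonneg _) (Finset.mem_univ i)

theorem en_sq_le {k : ℕ} (x : Fin k → ℝ) : en x ^ 2 ≤ k * ‖x‖ ^ 2 := by
  rw [en_sq]
  calc ∑ i, x i ^ 2 ≤ ∑ _i : Fin k, ‖x‖ ^ 2 := by
        refine Finset.sum_le_sum fun i _ => ?_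
        rw [← sq_abs]
        exact pow_le_pow_left₀ (abs_nonneg _) (norm_le_pi_norm x i) 2
    _ = k * ‖x‖ ^ 2 := by simp

theorem en_le {k : ℕ} (x : Fin k → ℝ) : en x ≤ (k + 1) * ‖x‖ := by
  refine abs_le_of_sq_le_sq' ?_ (by positivity) |>.2
  have := en_sq_le x
  have : (0 : ℝ) ≤ k := k.cast_nonneg
  have := sq_nonneg ‖x‖
  nlinarith [mul_nonneg ‹(0 : ℝ) ≤ k› this, mul_nonneg ‹(0 : ℝ) ≤ k› (mul_nonneg ‹(0 : ℝ) ≤ k› this)]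

theorem abs_dotProduct_le_en {k : ℕ} (x y : Fin k → ℝ) : |x ⬝ᵥ y| ≤ en x * en y := by
  refine abs_le_of_sq_le_sq ?_ (mul_nonneg (en_nonneg x) (en_nonneg y))
  rw [mul_pow, en_sq, en_sq]
  exact Finset.sum_mul_sq_le_sq_mul_sq _ _ _

theorem exists_mulVec_bound {k l : ℕ} (P : Matrix (Fin k) (Fin l) ℝ) :
    ∃ C : ℝ, 0 < C ∧ ∀ x, ‖P.mulVec x‖ ≤ C * ‖x‖ := by
  obtain ⟨C, hC, h⟩ := (LinearMap.toContinuousLinearMap (Matrix.toLin' P)).bound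
  exact ⟨C, hC, fun x => by simpa using h x⟩

theorem exists_qn_lower {k : ℕ} {P : Matrix (Fin k) (Fin k) ℝ} (hP : P.PosDef) :
    ∃ c : ℝ, 0 < c ∧ ∀ x, c * ‖x‖ ^ 2 ≤ qn P x := by
  have hcont : Continuous (qn P) := by
    unfold qn
    exact Continuous.dotProduct continuous_id (Continuous.matrix_mulVec continuous_const continuous_id)
  have hpos : ∀ x, x ≠ 0 → 0 < qn P x := fun x hx => by
    simpa [qn] using hP.dotProduct_mulVec_pos hx
  have hsm : ∀ (t : ℝ) x, qn P (t • x) = t ^ 2 * qn P x := fun t x => by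
    simp [qn, Matrix.mulVec_smul]; ring
  rcases (Metric.sphere (0 : Fin k → ℝ) 1).eq_empty_or_nonempty with he | hne
  · refine ⟨1, one_pos, fun x => ?_⟩
    have hx : x = 0 := by
      by_contra hx
      have : (‖x‖⁻¹ • x) ∈ Metric.sphere (0 : Fin k → ℝ) 1 := by
        simp [norm_smul, norm_ne_zero_iff.2 hx]
      simp [he] at this
    simp [hx, qn]
  · obtain ⟨z, hz, hmin⟩ := (isCompact_sphere (0 : Fin k → ℝ) 1).exists_isMinOn hne
      hcont.continuousOn
    have hz0 : z ≠ 0 := by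
      rintro rfl
      simp at hz
    refine ⟨qn P z, hpos z hz0, fun x => ?_⟩
    rcases eq_or_ne x 0 with rfl | hx
    · simp [qn]
    have hx' : ‖x‖ ≠ 0 := norm_ne_zero_iff.2 hx
    have h1 : qn P z ≤ qn P (‖x‖⁻¹ • x) := hmin (by simp [norm_smul, hx'])
    have h2 : qn P x = ‖x‖ ^ 2 * qn P (‖x‖⁻¹ • x) := by
      rw [← hsm, smul_smul, mul_inv_cancel₀ hx', one_smul]
    rw [h2, mul_comm]
    gcongr

theorem exists_qn_add_le {k : ℕ} (P : Matrix (Fin k) (Fin k) ℝ) :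
    ∃ C : ℝ, 0 < C ∧ ∀ x y, qn P (x + y) ≤ qn P x + C * (‖x‖ + ‖y‖) * ‖y‖ := by
  obtain ⟨C, hC, h⟩ := exists_mulVec_bound P
  refine ⟨2 * (k + 1) ^ 2 * C, by positivity, fun x y => ?_⟩
  have key : ∀ a b : Fin k → ℝ, a ⬝ᵥ P.mulVec b ≤ (k + 1) ^ 2 * C * (‖a‖ * ‖b‖) := fun a b => by
    calc a ⬝ᵥ P.mulVec b ≤ en a * en (P.mulVec b) :=
          (le_abs_self _).trans (abs_dotProduct_le_en _ _)
      _ ≤ ((k + 1) * ‖a‖) * ((k + 1) * (C * ‖b‖)) := by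
          gcongr
          · exact en_nonneg _
          · exact en_le a
          · exact (en_le _).trans (by gcongr; exact h b)
      _ = _ := by ring
  have e : qn P (x + y) = qn P x + (x ⬝ᵥ P.mulVec y + y ⬝ᵥ P.mulVec x + y ⬝ᵥ P.mulVec y) := by
    simp [qn, Matrix.mulVec_add, add_dotProduct, dotProduct_add]; ring
  have : 0 ≤ (k + 1) ^ 2 * C * (‖y‖ * ‖y‖) := by positivity
  rw [e]
  nlinarith [key x y, key y x, key y y]

theorem qn_sub_le_of_midpoint {k : ℕ} {P : Matrix (Fin k) (Fin k) ℝ} (a b : Fin k → ℝ)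
    (h : qn P b ≤ qn P ((1 / 2 : ℝ) • (a + b))) : qn P (a - b) ≤ 2 * (qn P a - qn P b) := by
  have e : 4 * qn P ((1 / 2 : ℝ) • (a + b)) + qn P (a - b) = 2 * qn P a + 2 * qn P b := by
    simp [qn, Matrix.mulVec_add, Matrix.mulVec_sub, Matrix.mulVec_smul, add_dotProduct,
      dotProduct_add, sub_dotProduct, dotProduct_sub]
    ring
  linarith

theorem exists_taylor_bound {E F : Type*} [NormedAddCommGroup E] [NormedSpace ℝ E]
    [ProperSpace E] [NormedAddCommGroup F] [NormedSpace ℝ F] {g : E → F} (hg : ContDiff ℝ 2 g)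
    (r : ℝ) : ∃ L : ℝ, 0 < L ∧ (∀ x, ‖x‖ ≤ r → ∀ v, ‖fderiv ℝ g x v‖ ≤ L * ‖v‖) ∧
      ∀ x x' z, ‖x‖ ≤ r → ‖x'‖ ≤ r →
        ‖g x' + fderiv ℝ g x' (z - x') - (g x + fderiv ℝ g x (z - x))‖ ≤
          L * ‖x' - x‖ * (‖x' - x‖ + ‖z - x'‖) := by
  have hg1 : ContDiff ℝ 1 (fderiv ℝ g) := hg.fderiv_right (by norm_num)
  have hcomp := isCompact_closedBall (0 : E) r
  obtain ⟨L1, hL1⟩ := hcomp.exists_bound_of_continuousOn (hg1.continuous.continuousOn)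
  obtain ⟨L2, hL2⟩ := hcomp.exists_bound_of_continuousOn
    ((hg1.continuous_fderiv (by norm_num)).continuousOn)
  simp only [mem_closedBall_zero_iff] at hL1 hL2
  set L := max (max L1 L2) 1 with hL
  have hL1L : L1 ≤ L := (le_max_left _ _).trans (le_max_left _ _)
  have hL2L : L2 ≤ L := (le_max_right _ _).trans (le_max_left _ _)
  have hLpos : 0 < L := one_pos.trans_le (le_max_right _ _)
  refine ⟨L, hLpos, fun x hx v => ?_, fun x x' z hx hx' => ?_⟩
  · exact ((fderiv ℝ g x).le_opNorm v).trans
      (mul_le_mul_of_nonneg_right ((hL1 x hx).trans hL1L) (norm_nonneg _))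
  have hlip : ∀ y ∈ Metric.closedBall (0 : E) r, ∀ w ∈ Metric.closedBall (0 : E) r,
      ‖fderiv ℝ g w - fderiv ℝ g y‖ ≤ L * ‖w - y‖ := fun y hy w hw =>
    (convex_closedBall (0 : E) r).norm_image_sub_le_of_norm_fderiv_le
      (fun a _ => (hg1.differentiable (by norm_num)) a)
      (fun a ha => (hL2 a (mem_closedBall_zero_iff.1 ha)).trans hL2L) hy hw
  have hxm : x ∈ Metric.closedBall (0 : E) r := mem_closedBall_zero_iff.2 hx
  have hxm' : x' ∈ Metric.closedBall (0 : E) r := mem_closedBall_zero_iff.2 hx'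
  have h1 : ‖g x' - g x - fderiv ℝ g x (x' - x)‖ ≤ L * ‖x' - x‖ * ‖x' - x‖ := by
    refine (convex_segment x x').norm_image_sub_le_of_norm_hasFDerivWithin_le'
      (f' := fderiv ℝ g)
      (fun a _ => ((hg.differentiable (by norm_num)) a).hasFDerivAt.hasFDerivWithinAt)
      (fun a ha => ?_) (left_mem_segment ℝ x x') (right_mem_segment ℝ x x')
    refine (hlip x hxm a ((convex_closedBall (0 : E) r).segment_subset hxm hxm' ha)).trans ?_
    gcongr
    obtain ⟨t, ht, rfl⟩ := (segment_eq_image' ℝ x x') ▸ ha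
    simp only [add_sub_cancel_left, norm_smul, Real.norm_eq_abs, abs_of_nonneg ht.1]
    exact mul_le_of_le_one_left (norm_nonneg _) ht.2
  have h2 : ‖(fderiv ℝ g x' - fderiv ℝ g x) (z - x')‖ ≤ L * ‖x' - x‖ * ‖z - x'‖ :=
    ((fderiv ℝ g x' - fderiv ℝ g x).le_opNorm _).trans
      (mul_le_mul_of_nonneg_right (hlip x hxm x' hxm') (norm_nonneg _))
  have e : g x' + fderiv ℝ g x' (z - x') - (g x + fderiv ℝ g x (z - x)) =
      (g x' - g x - fderiv ℝ g x (x' - x)) + (fderiv ℝ g x' - fderiv ℝ g x) (z - x') := by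
    simp only [map_sub, _root_.sub_apply]
    abel
  rw [e, mul_add]
  exact (norm_add_le _ _).trans (add_le_add h1 h2)


theorem exists_controllability_preimage {n m : ℕ} (A : Matrix (Fin n) (Fin n) ℝ)
    (B : Matrix (Fin n) (Fin m) ℝ) {μ : ℝ} (hμ : 0 < μ)
    (h : ∀ w, μ * en w ≤ Real.sqrt (∑ k ∈ Finset.range n, en ((A ^ k * B)ᵀ.mulVec w) ^ 2))
    (ξ : Fin n → ℝ) :
    ∃ w : ℕ → Fin m → ℝ, ∑ k ∈ Finset.range n, (A ^ k * B).mulVec (w k) = ξ ∧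
      ∀ k < n, μ * en (w k) ≤ en ξ := by
  set G : Matrix (Fin n) (Fin n) ℝ :=
    ∑ k ∈ Finset.range n, (A ^ k * B) * (A ^ k * B)ᵀ with hG
  have hGv : ∀ v, G.mulVec v =
      ∑ k ∈ Finset.range n, (A ^ k * B).mulVec ((A ^ k * B)ᵀ.mulVec v) := fun v => by
    simp only [hG, Matrix.sum_mulVec, Matrix.mulVec_mulVec]
  have hquad : ∀ v, v ⬝ᵥ G.mulVec v =
      ∑ k ∈ Finset.range n, en ((A ^ k * B)ᵀ.mulVec v) ^ 2 := fun v => by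
    rw [hGv, dotProduct_sum]
    refine Finset.sum_congr rfl fun k _ => ?_
    rw [en_sq_eq_dotProduct, Matrix.dotProduct_mulVec, ← Matrix.mulVec_transpose]
  have hlow : ∀ v, (μ * en v) ^ 2 ≤ v ⬝ᵥ G.mulVec v := fun v => by
    rw [hquad, ← Real.sq_sqrt (Finset.sum_nonneg fun _ _ => sq_nonneg _)]
    exact pow_le_pow_left₀ (mul_nonneg hμ.le (en_nonneg v)) (h v) 2
  have hinj : Function.Injective (Matrix.toLin' G) := by
    refine (injective_iff_map_eq_zero _).2 fun v hv => ?_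
    have h0 := hlow v
    rw [← Matrix.toLin'_apply, hv, dotProduct_zero] at h0
    have h1 : μ * en v = 0 := by nlinarith
    have h2 : en v = 0 := (mul_eq_zero.1 h1).resolve_left hμ.ne'
    exact norm_le_zero_iff.1 ((norm_le_en v).trans h2.le)
  obtain ⟨l, hl⟩ := (LinearMap.injective_iff_surjective.1 hinj) ξ
  rw [Matrix.toLin'_apply] at hl
  refine ⟨fun k => (A ^ k * B)ᵀ.mulVec l, by rw [← hGv, hl], fun k hk => ?_⟩
  have h1 := hlow l
  rw [hl] at h1
  have h2 : l ⬝ᵥ ξ ≤ en l * en ξ := (le_abs_self _).trans (abs_dotProduct_le_en _ _)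
  have h3 : μ ^ 2 * en l ≤ en ξ := by
    rcases (en_nonneg l).eq_or_lt with h0 | h0
    · rw [← h0, mul_zero]
      exact en_nonneg ξ
    · nlinarith
  have h4 : en ((A ^ k * B)ᵀ.mulVec l) ^ 2 ≤ l ⬝ᵥ ξ := by
    rw [← hl, hquad]
    exact Finset.single_le_sum (f := fun k => en ((A ^ k * B)ᵀ.mulVec l) ^ 2)
      (fun _ _ => sq_nonneg _) (Finset.mem_range.2 hk)
  refine (abs_le_of_sq_le_sq' ?_ (en_nonneg ξ)).2
  calc (μ * en ((A ^ k * B)ᵀ.mulVec l)) ^ 2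
      = μ ^ 2 * en ((A ^ k * B)ᵀ.mulVec l) ^ 2 := mul_pow _ _ _
    _ ≤ μ ^ 2 * (en l * en ξ) := by gcongr; exact h4.trans h2
    _ = (μ ^ 2 * en l) * en ξ := by ring
    _ ≤ en ξ * en ξ := mul_le_mul_of_nonneg_right h3 (en_nonneg ξ)
    _ = en ξ ^ 2 := (sq _).symm

theorem le_geom_of_le_step {a : ℕ → ℝ} {L c η : ℝ} {N : ℕ} (hL : 0 ≤ L) (hc : 0 ≤ c) (hη : 0 ≤ η)
    (h0 : a 0 ≤ η) (h : ∀ k < N, a (k + 1) ≤ L * a k + c * η) {k : ℕ} (hk : k ≤ N) :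
    a k ≤ (1 + L + c) ^ N * η := by
  have key : ∀ k ≤ N, a k ≤ (1 + L + c) ^ k * η := fun k => by
    induction k with
    | zero => intro _; simpa using h0
    | succ k ih =>
      intro hk
      have h1 : 1 ≤ (1 + L + c) ^ k := one_le_pow₀ (by linarith)
      calc a (k + 1) ≤ L * a k + c * η := h k hk
        _ ≤ L * ((1 + L + c) ^ k * η) + c * ((1 + L + c) ^ k * η) := by
            gcongr
            · exact ih (by omega)
            · exact le_mul_of_one_le_left hη h1
        _ ≤ (1 + L + c) ^ (k + 1) * η := by
            rw [pow_succ]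
            nlinarith [mul_nonneg (zero_le_one.trans h1) hη]
  refine (key k hk).trans ?_
  gcongr
  linarith

theorem forced_response_eq_sum {n m : ℕ} (A : Matrix (Fin n) (Fin n) ℝ)
    (B : Matrix (Fin n) (Fin m) ℝ) (w : ℕ → Fin m → ℝ) (g : ℕ → Fin n → ℝ) (h0 : g 0 = 0)
    (h : ∀ k, g (k + 1) = A.mulVec (g k) + B.mulVec (w k)) (k : ℕ) :
    g k = ∑ j ∈ Finset.range k, (A ^ j * B).mulVec (w (k - 1 - j)) := by
  induction k with
  | zero => simpa using h0
  | succ k ih =>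
    rw [h, ih, Finset.sum_range_succ', Matrix.mulVec_sum]
    congr 1
    · refine Finset.sum_congr rfl fun j _ => ?_
      rw [Matrix.mulVec_mulVec, ← Matrix.mul_assoc, ← pow_succ',
        show k + 1 - 1 - (j + 1) = k - 1 - j by omega]
    · simp

theorem exists_steering {n m N : ℕ} (hN : n ≤ N) (B : Matrix (Fin n) (Fin m) ℝ) {μ L : ℝ}
    (hμ : 0 < μ) (hL : 0 ≤ L) :
    ∃ C : ℝ, 0 < C ∧ ∀ A : Matrix (Fin n) (Fin n) ℝ, (∀ v, ‖A.mulVec v‖ ≤ L * ‖v‖) →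
      (∀ w, μ * en w ≤ Real.sqrt (∑ k ∈ Finset.range n, en ((A ^ k * B)ᵀ.mulVec w) ^ 2)) →
      ∀ (e x0 ξ : Fin n → ℝ) (z : ℕ → Fin n → ℝ) (v : ℕ → Fin m → ℝ) (η : ℝ),
        ‖x0 - z 0‖ ≤ η → (∀ k < N, ‖A.mulVec (z k) + B.mulVec (v k) + e - z (k + 1)‖ ≤ η) →
        ‖ξ - z N‖ ≤ η →
        ∃ (x : ℕ → Fin n → ℝ) (u : ℕ → Fin m → ℝ), x 0 = x0 ∧ x N = ξ ∧
          (∀ k < N, x (k + 1) = A.mulVec (x k) + B.mulVec (u k) + e) ∧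
          (∀ k ≤ N, ‖x k - z k‖ ≤ C * η) ∧ ∀ k < N, ‖u k - v k‖ ≤ C * η := by
  obtain ⟨b, hb, hB⟩ := exists_mulVec_bound B
  set C1 : ℝ := (1 + L + 1) ^ N with hC1
  have hC1pos : 0 < C1 := by positivity
  set C2 : ℝ := (n + 1) * (C1 + 1) / μ with hC2
  have hC2pos : 0 < C2 := by positivity
  set C3 : ℝ := (1 + L + b * C2) ^ N with hC3
  have hC3pos : 0 < C3 := by positivity
  refine ⟨C1 + C2 + C3, by positivity, fun A hA hctr e x0 ξ z v η h0 hz hξ => ?_⟩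
  have hη : 0 ≤ η := (norm_nonneg _).trans h0
  let y : ℕ → Fin n → ℝ := fun k =>
    Nat.rec x0 (fun k x => A.mulVec x + B.mulVec (v k) + e) k
  have hy : ∀ k ≤ N, ‖y k - z k‖ ≤ C1 * η := fun k hk => by
    refine le_geom_of_le_step (a := fun k => ‖y k - z k‖) hL zero_le_one hη h0 (fun k hk => ?_) hk
    have : y (k + 1) - z (k + 1) =
        A.mulVec (y k - z k) + (A.mulVec (z k) + B.mulVec (v k) + e - z (k + 1)) := by
      change A.mulVec (y k) + B.mulVec (v k) + e - z (k + 1) = _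
      rw [Matrix.mulVec_sub]
      abel
    simp only [this, one_mul]
    exact (norm_add_le _ _).trans (add_le_add (hA _) (hz k hk))
  obtain ⟨w0, hw0, hw0b⟩ := exists_controllability_preimage A B hμ hctr (ξ - y N)
  have hdiff : ‖ξ - y N‖ ≤ (C1 + 1) * η := by
    have : ξ - y N = (ξ - z N) - (y N - z N) := by abel
    rw [this]
    refine (norm_sub_le _ _).trans ?_
    linarith [hy N le_rfl]
  let w : ℕ → Fin m → ℝ := fun k => if N - 1 - k < n then w0 (N - 1 - k) else 0
  have hw : ∀ k, ‖w k‖ ≤ C2 * η := fun k => by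
    by_cases hk : N - 1 - k < n
    · simp only [w, hk, if_true]
      refine (norm_le_en _).trans ?_
      rw [hC2, div_mul_eq_mul_div, le_div_iff₀ hμ, mul_comm]
      refine (hw0b _ hk).trans ((en_le _).trans ?_)
      rw [mul_assoc]
      gcongr
    · simp only [w, hk, if_false, norm_zero]
      positivity
  let g : ℕ → Fin n → ℝ := fun k => Nat.rec 0 (fun k x => A.mulVec x + B.mulVec (w k)) k
  have hgN : g N = ξ - y N := by
    rw [forced_response_eq_sum A B w g rfl (fun _ => rfl) N, ← hw0]
    symm
    refine (Finset.sum_subset_zero_on_sdiff (Finset.range_mono hN) (fun j hj => ?_)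
      (fun j hj => ?_))
    · simp only [Finset.mem_sdiff, Finset.mem_range] at hj
      have : w (N - 1 - j) = 0 := if_neg (by omega)
      rw [this, Matrix.mulVec_zero]
    · simp only [Finset.mem_range] at hj
      have h1 : N - 1 - (N - 1 - j) = j := by omega
      have : w (N - 1 - j) = w0 j := by simp only [w, h1, hj, if_true]
      rw [this]
  have hg : ∀ k ≤ N, ‖g k‖ ≤ C3 * η := fun k hk => by
    refine le_geom_of_le_step (a := fun k => ‖g k‖) hL (by positivity) hη
      (by simpa [g] using hη) (fun k hk => ?_) hk
    refine (norm_add_le _ _).trans (add_le_add (hA _) ((hB _).trans ?_))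
    rw [mul_assoc]
    gcongr
    exact hw k
  refine ⟨fun k => y k + g k, fun k => v k + w k, by simp [y, g], by simp [hgN], fun k _ => ?_,
    fun k hk => ?_, fun k hk => ?_⟩
  · change A.mulVec (y k) + B.mulVec (v k) + e + (A.mulVec (g k) + B.mulVec (w k)) = _
    rw [Matrix.mulVec_add, Matrix.mulVec_add]
    abel
  · have : y k + g k - z k = (y k - z k) + g k := by abel
    rw [this]
    refine (norm_add_le _ _).trans ?_
    nlinarith [hy k hk, hg k hk, mul_nonneg hC2pos.le hη]
  · simp only [add_sub_cancel_left]
    refine (hw k).trans ?_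
    nlinarith [mul_nonneg hC1pos.le hη, mul_nonneg hC3pos.le hη]

theorem exists_rollout_bound {n m : ℕ} {f0 : (Fin n → ℝ) → Fin n → ℝ} (hf0 : ContDiff ℝ 2 f0)
    (B : Matrix (Fin n) (Fin m) ℝ) (β : ℝ) (K : ℕ) :
    ∃ C : ℝ, 0 < C ∧ ∀ (s : ℝ) (xb : ℕ → Fin n → ℝ) (ub : ℕ → Fin m → ℝ) (xt : Fin n → ℝ),
      0 ≤ s → s ≤ 1 → ‖xt‖ ≤ β → xb 0 = xt →
      (∀ k < K, xb (k + 1) = flin f0 B xt (xb k) (ub k)) → (∀ k ≤ K, ‖xb k - xt‖ ≤ β * s) →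
      ‖rollout f0 B xt ub K - xb K‖ ≤ C * s ^ 2 := by
  induction K with
  | zero =>
    refine ⟨1, one_pos, fun s xb ub xt hs _ _ h0 _ _ => ?_⟩
    simp only [rollout, h0, sub_self, norm_zero]
    positivity
  | succ K ih =>
    obtain ⟨C, hC, h⟩ := ih
    obtain ⟨L, hL, hA, hT⟩ := exists_taylor_bound hf0 (C + |β| + |β|)
    refine ⟨L * (C + |β|) ^ 2 + L * C, by positivity, fun s xb ub xt hs hs1 hxt h0 hx hd => ?_⟩
    have hr := h s xb ub xt hs hs1 hxt h0 (fun k hk => hx k (by omega))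
      (fun k hk => hd k (by omega))
    set r := rollout f0 B xt ub K with hrdef
    have hβ : β ≤ |β| := le_abs_self β
    have hs2 : s ^ 2 ≤ s := by nlinarith
    have hrx : ‖r - xt‖ ≤ (C + |β|) * s := by
      have : r - xt = (r - xb K) + (xb K - xt) := by abel
      rw [this]
      refine (norm_add_le _ _).trans ?_
      nlinarith [hd K (by omega), mul_le_mul_of_nonneg_left hs2 hC.le,
        mul_le_mul_of_nonneg_right hβ hs]
    have hrn : ‖r‖ ≤ C + |β| + |β| := by
      have : r = (r - xt) + xt := by abel
      rw [this]
      refine (norm_add_le _ _).trans ?_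
      have : (C + |β|) * s ≤ C + |β| := mul_le_of_le_one_right (by positivity) hs1
      linarith
    have hxn : ‖xt‖ ≤ C + |β| + |β| := by linarith [abs_nonneg β]
    have e : rollout f0 B xt ub (K + 1) - xb (K + 1) =
        (f0 r + fderiv ℝ f0 r (r - r) - (f0 xt + fderiv ℝ f0 xt (r - xt))) +
          fderiv ℝ f0 xt (r - xb K) := by
      rw [hx K (by omega), flin_eq]
      simp only [rollout, fdyn, ← hrdef, map_sub, sub_self, map_zero]
      abel
    rw [e]
    refine (norm_add_le _ _).trans ?_
    have h1 := hT xt r r hxn hrn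
    rw [sub_self r, norm_zero, add_zero] at h1
    rw [sub_self r]
    calc _ ≤ L * ‖r - xt‖ * ‖r - xt‖ + L * ‖r - xb K‖ := add_le_add h1 (hA xt hxn _)
      _ ≤ L * ((C + |β|) * s) * ((C + |β|) * s) + L * (C * s ^ 2) := by gcongr
      _ = _ := by ring


theorem exists_steadyState_transfer {n m p : ℕ} {f0 : (Fin n → ℝ) → Fin n → ℝ}
    {h0 : (Fin n → ℝ) → Fin p → ℝ} (hf0 : ContDiff ℝ 2 f0) (hh0 : ContDiff ℝ 2 h0)
    (B : Matrix (Fin n) (Fin m) ℝ) (D : Matrix (Fin p) (Fin m) ℝ) (Us : Set (Fin m → ℝ))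
    {σl : ℝ} (hσl : 0 < σl) (hA4 : A4holds f0 σl) (r : ℝ) :
    ∃ C : ℝ, 0 < C ∧ ∀ x x' xs us, ‖x‖ ≤ r → ‖x'‖ ≤ r → (xs, us) ∈ Zlin f0 B Us x →
      ∃ xs', (xs', us) ∈ Zlin f0 B Us x' ∧
        ‖xs' - xs‖ ≤ C * (‖x' - x‖ * (‖x' - x‖ + ‖xs - x'‖)) ∧
        ‖hlin h0 D x' xs' us - hlin h0 D x xs us‖ ≤
          C * (‖x' - x‖ * (‖x' - x‖ + ‖xs - x'‖)) := by
  obtain ⟨L, hL, -, hT⟩ := exists_taylor_bound hf0 r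
  obtain ⟨M, hM, hC, hTh⟩ := exists_taylor_bound hh0 r
  set c1 : ℝ := (n + 1) / σl * L with hc1
  have hc1pos : 0 < c1 := by positivity
  refine ⟨c1 + M * c1 + M, by positivity, fun x x' xs us hx hx' hz => ?_⟩
  set t := ‖x' - x‖ * (‖x' - x‖ + ‖xs - x'‖) with ht
  have ht0 : 0 ≤ t := by positivity
  have hinv : ∀ v, ‖v‖ ≤ (n + 1) / σl * ‖v - fderiv ℝ f0 x' v‖ := fun v => by
    have h1 := hA4 x' v
    rw [jac_mulVec] at h1
    rw [div_mul_eq_mul_div, le_div_iff₀ hσl]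
    calc ‖v‖ * σl ≤ σl * en v := by
          rw [mul_comm]
          exact mul_le_mul_of_nonneg_left (norm_le_en v) hσl.le
      _ ≤ _ := h1.trans (en_le _)
  have hinj : Function.Injective
      (LinearMap.id - (fderiv ℝ f0 x').toLinearMap : (Fin n → ℝ) →ₗ[ℝ] (Fin n → ℝ)) := by
    refine (injective_iff_map_eq_zero _).2 fun v hv => ?_
    have h1 : v - fderiv ℝ f0 x' v = 0 := by simpa using hv
    have h2 := hinv v
    rw [h1, norm_zero, mul_zero] at h2
    exact norm_le_zero_iff.1 h2
  obtain ⟨d, hd⟩ := (LinearMap.injective_iff_surjective.1 hinj)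
    (flin f0 B x' xs us - flin f0 B x xs us)
  have hd : d - fderiv ℝ f0 x' d = flin f0 B x' xs us - flin f0 B x xs us := by simpa using hd
  have hfd : ‖flin f0 B x' xs us - flin f0 B x xs us‖ ≤ L * t := by
    rw [flin_eq, flin_eq, add_sub_add_right_eq_sub, ht, ← mul_assoc]
    exact hT x x' xs hx hx'
  have hhd : ‖hlin h0 D x' xs us - hlin h0 D x xs us‖ ≤ M * t := by
    rw [hlin_eq, hlin_eq, add_sub_add_right_eq_sub, ht, ← mul_assoc]
    exact hTh x x' xs hx hx'
  have hdn : ‖d‖ ≤ c1 * t := by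
    refine (hinv d).trans ?_
    rw [hd, hc1, mul_assoc]
    gcongr
  refine ⟨xs + d, ⟨hz.1, ?_⟩, ?_, ?_⟩
  · have h1 : xs = flin f0 B x xs us := hz.2
    have h2 : flin f0 B x' (xs + d) us = flin f0 B x' xs us + fderiv ℝ f0 x' d := by
      simp only [flin_eq, map_sub, map_add]
      abel
    change xs + d = flin f0 B x' (xs + d) us
    rw [← h1] at hd
    rw [h2, ← sub_eq_iff_eq_add, add_sub_assoc, hd]
    abel
  · rw [add_sub_cancel_left]
    refine hdn.trans ?_
    nlinarith [mul_nonneg (mul_nonneg hM.le hc1pos.le) ht0, mul_nonneg hM.le ht0]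
  · have h2 : hlin h0 D x' (xs + d) us - hlin h0 D x xs us =
        fderiv ℝ h0 x' d + (hlin h0 D x' xs us - hlin h0 D x xs us) := by
      simp only [hlin_eq, map_sub, map_add]
      abel
    rw [h2]
    refine (norm_add_le _ _).trans ?_
    have h3 := (hC x' hx' d).trans (mul_le_mul_of_nonneg_left hdn hM.le)
    nlinarith [mul_nonneg hc1pos.le ht0]

theorem steadyState_dist_le {n m p : ℕ} {f0 : (Fin n → ℝ) → Fin n → ℝ}
    {h0 : (Fin n → ℝ) → Fin p → ℝ} {B : Matrix (Fin n) (Fin m) ℝ} {D : Matrix (Fin p) (Fin m) ℝ}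
    {Us : Set (Fin m → ℝ)} {σs : ℝ} (hσs : 0 < σs) (hA2 : A2holds f0 h0 B D σs)
    {x x1 x2 : Fin n → ℝ} {u1 u2 : Fin m → ℝ} (h1 : (x1, u1) ∈ Zlin f0 B Us x)
    (h2 : (x2, u2) ∈ Zlin f0 B Us x) :
    ‖x1 - x2‖ ≤ (p + 1) / σs * ‖hlin h0 D x x1 u1 - hlin h0 D x x2 u2‖ := by
  have e1 : x1 = flin f0 B x x1 u1 := h1.2
  have e2 : x2 = flin f0 B x x2 u2 := h2.2
  have h := hA2 x (x1 - x2) (u1 - u2)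
  have k1 : (jac f0 x).mulVec (x1 - x2) - (x1 - x2) + B.mulVec (u1 - u2) = 0 := by
    have : (jac f0 x).mulVec (x1 - x2) - (x1 - x2) + B.mulVec (u1 - u2) =
        flin f0 B x x1 u1 - flin f0 B x x2 u2 - (x1 - x2) := by
      simp only [flin, Matrix.mulVec_sub]
      abel
    rw [this, ← e1, ← e2, sub_self]
  have k2 : (jac h0 x).mulVec (x1 - x2) + D.mulVec (u1 - u2) =
      hlin h0 D x x1 u1 - hlin h0 D x x2 u2 := by
    simp only [hlin, Matrix.mulVec_sub]
    abel
  have k3 : en (0 : Fin n → ℝ) = 0 := by simp [en]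
  rw [k1, k2, k3, zero_pow two_ne_zero, zero_add, Real.sqrt_sq (en_nonneg _)] at h
  rw [div_mul_eq_mul_div, le_div_iff₀ hσs, mul_comm]
  refine (mul_le_mul_of_nonneg_left ?_ hσs.le).trans (h.trans (en_le _))
  refine (norm_le_en _).trans (Real.le_sqrt_of_sq_le ?_)
  linarith [sq_nonneg (en (u1 - u2))]

theorem Zlin_midpoint {n m p : ℕ} {f0 : (Fin n → ℝ) → Fin n → ℝ}
    {h0 : (Fin n → ℝ) → Fin p → ℝ} {B : Matrix (Fin n) (Fin m) ℝ} {D : Matrix (Fin p) (Fin m) ℝ}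
    {Us : Set (Fin m → ℝ)} (hUs : Convex ℝ Us)
    {x x1 x2 : Fin n → ℝ} {u1 u2 : Fin m → ℝ} (h1 : (x1, u1) ∈ Zlin f0 B Us x)
    (h2 : (x2, u2) ∈ Zlin f0 B Us x) (yr : Fin p → ℝ) :
    ∃ z ∈ Zlin f0 B Us x, hlin h0 D x z.1 z.2 - yr =
      (1 / 2 : ℝ) • ((hlin h0 D x x1 u1 - yr) + (hlin h0 D x x2 u2 - yr)) := by
  have e1 : x1 = flin f0 B x x1 u1 := h1.2
  have e2 : x2 = flin f0 B x x2 u2 := h2.2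
  refine ⟨((1 / 2 : ℝ) • (x1 + x2), (1 / 2 : ℝ) • (u1 + u2)), ⟨?_, ?_⟩, ?_⟩
  · have := hUs h1.1 h2.1 (by norm_num : (0 : ℝ) ≤ 1 / 2) (by norm_num : (0 : ℝ) ≤ 1 / 2)
      (by norm_num)
    simpa [smul_add] using this
  · change (1 / 2 : ℝ) • (x1 + x2) = flin f0 B x ((1 / 2 : ℝ) • (x1 + x2)) ((1 / 2 : ℝ) • (u1 + u2))
    have : flin f0 B x ((1 / 2 : ℝ) • (x1 + x2)) ((1 / 2 : ℝ) • (u1 + u2)) =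
        (1 / 2 : ℝ) • (flin f0 B x x1 u1 + flin f0 B x x2 u2) := by
      simp only [flin, Matrix.mulVec_smul, Matrix.mulVec_add]
      module
    rw [this, ← e1, ← e2]
  · simp only [hlin, Matrix.mulVec_smul, Matrix.mulVec_add]
    module

theorem le_mul_of_sq_le_add {k s a : ℝ} (hk : 0 ≤ k) (hs : 0 ≤ s) (ha : 0 ≤ a)
    (h : a ^ 2 ≤ k * s ^ 2 + k * (s * a)) : a ≤ (k + 1) * s := by
  by_contra hcon
  push Not at hcon
  nlinarith [mul_nonneg hk hs, mul_nonneg hs ha]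

theorem le_inv_sqrt_mul_of_sq_le {c a s : ℝ} (hc : 0 < c) (hs : 0 ≤ s) (h : c * a ^ 2 ≤ s ^ 2) :
    a ≤ (√c)⁻¹ * s := by
  refine (abs_le_of_sq_le_sq' ?_ (by positivity)).2
  rw [mul_pow, inv_pow, Real.sq_sqrt hc.le, inv_mul_eq_div, le_div_iff₀ hc]
  linarith

set_option maxHeartbeats 400000 in
theorem exists_equilibriumCost_le {n m p : ℕ} {f0 : (Fin n → ℝ) → Fin n → ℝ}
    {h0 : (Fin n → ℝ) → Fin p → ℝ} (hf0 : ContDiff ℝ 2 f0) (hh0 : ContDiff ℝ 2 h0)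
    (B : Matrix (Fin n) (Fin m) ℝ) (D : Matrix (Fin p) (Fin m) ℝ) {Us : Set (Fin m → ℝ)}
    (hUs : Convex ℝ Us) {S : Matrix (Fin p) (Fin p) ℝ} (hS : S.PosDef) (yr : Fin p → ℝ)
    {σs : ℝ} (hσs : 0 < σs) (hA2 : A2holds f0 h0 B D σs)
    {σl : ℝ} (hσl : 0 < σl) (hA4 : A4holds f0 σl)
    {b : ℝ} (hb : 0 < b) (hZ : ∀ xt, ∀ z ∈ Zlin f0 B Us xt, ‖z.1‖ ≤ b)
    {xsr : (Fin n → ℝ) → Fin n → ℝ} {usr : (Fin n → ℝ) → Fin m → ℝ}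
    (hsr : ∀ xt, (xsr xt, usr xt) ∈ Zlin f0 B Us xt ∧ ∀ z ∈ Zlin f0 B Us xt,
      qn S (hlin h0 D xt (xsr xt) (usr xt) - yr) ≤ qn S (hlin h0 D xt z.1 z.2 - yr))
    (r : ℝ) {c : ℝ} (hc : 0 < c) :
    ∃ C : ℝ, 0 < C ∧ ∀ x x' s j, 0 ≤ s → s ≤ 1 → 0 ≤ j → j ≤ 1 → ‖x‖ ≤ r → ‖x'‖ ≤ r →
      ‖x' - x‖ ≤ c * s → ‖xsr x - x‖ ≤ c * s →
      qn S (hlin h0 D x (xsr x) (usr x) - yr) ≤ j ^ 2 →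
      qn S (hlin h0 D x' (xsr x') (usr x') - yr) ≤ j ^ 2 →
      qn S (hlin h0 D x (xsr x) (usr x) - yr) ≤
        qn S (hlin h0 D x' (xsr x') (usr x') - yr) + C * (s + j) * s ^ 2 := by
  obtain ⟨C4, hC4, hss⟩ := exists_steadyState_transfer hf0 hh0 B D Us hσl hA4 r
  obtain ⟨l, hl, hlow⟩ := exists_qn_lower hS
  obtain ⟨Λ, hΛ, hup⟩ := exists_qn_add_le S
  obtain ⟨κ, hκdef⟩ : ∃ t : ℝ, t = (√l)⁻¹ := ⟨_, rfl⟩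
  have hκ : 0 < κ := by rw [hκdef]; positivity
  obtain ⟨C2, hC2def⟩ : ∃ t : ℝ, t = (p + 1) / σs := ⟨_, rfl⟩
  have hC2 : 0 < C2 := by rw [hC2def]; positivity
  obtain ⟨k1, hk1def⟩ : ∃ t : ℝ, t = 3 * C4 * c ^ 2 := ⟨_, rfl⟩
  have hk1 : 0 < k1 := by rw [hk1def]; positivity
  obtain ⟨k2, hk2def⟩ : ∃ t : ℝ, t = Λ * (κ + k1) * k1 := ⟨_, rfl⟩
  have hk2 : 0 < k2 := by rw [hk2def]; positivity
  obtain ⟨k0, hk0def⟩ : ∃ t : ℝ, t = C4 * c * (c + (b + |r|)) := ⟨_, rfl⟩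
  have hk0 : 0 < k0 := by rw [hk0def]; positivity
  obtain ⟨k3, hk3def⟩ : ∃ t : ℝ, t = Λ * (κ + k0) * (C4 * c) := ⟨_, rfl⟩
  have hk3 : 0 < k3 := by rw [hk3def]; positivity
  obtain ⟨k4, hk4def⟩ : ∃ t : ℝ, t = 2 / l * (k2 + k3 * c + k3) := ⟨_, rfl⟩
  have hk4 : 0 < k4 := by rw [hk4def]; positivity
  obtain ⟨k5, hk5def⟩ : ∃ t : ℝ, t = 2 * C2 ^ 2 * k4 + 2 * (k1 + c) ^ 2 := ⟨_, rfl⟩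
  have hk5 : 0 < k5 := by rw [hk5def]; positivity
  obtain ⟨k7, hk7def⟩ : ∃ t : ℝ, t = C4 * c * (c + (k5 + 1)) := ⟨_, rfl⟩
  have hk7 : 0 < k7 := by rw [hk7def]; positivity
  refine ⟨Λ * (κ + k7) * k7, by positivity,
    fun x x' s j hs hs1 hj hj1 hx hx' hxx hsx hJ hJ' => ?_⟩
  set y := hlin h0 D x (xsr x) (usr x) with hy
  set y' := hlin h0 D x' (xsr x') (usr x') with hy'
  have hs2 : s ^ 2 ≤ 1 := pow_le_one₀ hs hs1
  have hyn : ‖y - yr‖ ≤ κ * j := hκdef ▸ le_inv_sqrt_mul_of_sq_le hl hj ((hlow _).trans hJ)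
  have hyn' : ‖y' - yr‖ ≤ κ * j := hκdef ▸ le_inv_sqrt_mul_of_sq_le hl hj ((hlow _).trans hJ')
  obtain ⟨zx, hz, hzx, hzy⟩ := hss x x' _ _ hx hx' (hsr x).1
  obtain ⟨wx, hw, -, hwy⟩ := hss x' x _ _ hx' hx (hsr x').1
  set zy := hlin h0 D x' zx (usr x) with hzydef
  set wy := hlin h0 D x wx (usr x') with hwydef
  set α := ‖xsr x' - x‖ with hα
  have hα0 : 0 ≤ α := norm_nonneg _
  have hαm : α ≤ b + |r| := by
    refine (norm_sub_le _ _).trans (add_le_add (hZ _ _ (hsr x').1) (hx.trans (le_abs_self r)))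
  have hdist : ‖xsr x - x'‖ ≤ 2 * c * s := by
    have : xsr x - x' = (xsr x - x) - (x' - x) := by abel
    rw [this]
    refine (norm_sub_le _ _).trans ?_
    linarith
  have hk1s : C4 * (‖x' - x‖ * (‖x' - x‖ + ‖xsr x - x'‖)) ≤ k1 * s ^ 2 := by
    calc _ ≤ C4 * ((c * s) * (c * s + 2 * c * s)) := by gcongr
      _ = _ := by rw [hk1def]; ring
  replace hzx := hzx.trans hk1s
  replace hzy := hzy.trans hk1s
  set β := ‖wy - y'‖ with hβ
  have hβ0 : 0 ≤ β := norm_nonneg _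
  have hβle : β ≤ C4 * c * (c * s ^ 2 + s * α) := by
    refine hwy.trans ?_
    rw [norm_sub_rev x x']
    calc _ ≤ C4 * ((c * s) * (c * s + α)) := by gcongr
      _ = _ := by ring
  have hβk0 : β ≤ k0 := by
    refine hβle.trans ?_
    rw [hk0def]
    gcongr
    · exact mul_le_of_le_one_right hc.le hs2
    · exact (mul_le_of_le_one_left hα0 hs1).trans hαm
  have hzcost : qn S (zy - yr) ≤ qn S (y - yr) + k2 * s ^ 2 := by
    have h1 := hup (y - yr) (zy - y)
    have e : y - yr + (zy - y) = zy - yr := by abel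
    rw [e] at h1
    refine h1.trans (add_le_add le_rfl ?_)
    calc _ ≤ Λ * (κ * j + k1 * s ^ 2) * (k1 * s ^ 2) := by gcongr
      _ ≤ Λ * (κ * 1 + k1 * 1) * (k1 * s ^ 2) := by gcongr
      _ = _ := by rw [hk2def]; ring
  have hcost : qn S (y - yr) ≤ qn S (y' - yr) + Λ * (κ * j + β) * β := by
    have h1 := hup (y' - yr) (wy - y')
    have e : y' - yr + (wy - y') = wy - yr := by abel
    rw [e] at h1
    refine ((hsr x).2 _ hw).trans (h1.trans (add_le_add le_rfl ?_))
    gcongr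
  have hcost' : qn S (y - yr) ≤ qn S (y' - yr) + k3 * (c * s ^ 2 + s * α) := by
    refine hcost.trans (add_le_add le_rfl ?_)
    calc _ ≤ Λ * (κ * 1 + k0) * (C4 * c * (c * s ^ 2 + s * α)) := by gcongr
      _ = _ := by rw [hk3def]; ring
  have hsep : qn S (zy - y') ≤ 2 * (qn S (zy - yr) - qn S (y' - yr)) := by
    obtain ⟨q, hq, hqe⟩ := Zlin_midpoint (h0 := h0) (D := D) hUs hz (hsr x').1 yr
    have h1 := (hsr x').2 q hq
    rw [hqe] at h1
    have h2 := qn_sub_le_of_midpoint _ _ h1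
    rwa [sub_sub_sub_cancel_right] at h2
  have hysq : ‖zy - y'‖ ^ 2 ≤ k4 * (s ^ 2 + s * α) := by
    have h1 := (hlow _).trans hsep
    have h2 : l * ‖zy - y'‖ ^ 2 ≤ 2 * (k2 + k3 * c + k3) * (s ^ 2 + s * α) := by
      have h3 : 0 ≤ 2 * (k2 * (s * α) + k3 * c * (s * α) + k3 * s ^ 2) := by positivity
      have h4 : 2 * (k2 + k3 * c + k3) * (s ^ 2 + s * α) =
          2 * (k2 * s ^ 2 + k3 * (c * s ^ 2 + s * α)) +
            2 * (k2 * (s * α) + k3 * c * (s * α) + k3 * s ^ 2) := by ring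
      linarith only [h1, h3, h4, hzcost, hcost']
    have h3 : k4 * (s ^ 2 + s * α) = 2 * (k2 + k3 * c + k3) * (s ^ 2 + s * α) / l := by
      rw [hk4def]; ring
    rw [h3, le_div_iff₀ hl]
    linarith only [h2]
  have hαle : α ≤ C2 * ‖zy - y'‖ + (k1 + c) * s := by
    have e : xsr x' - x = -(zx - xsr x') + (zx - xsr x) + (xsr x - x) := by abel
    have h1 : _ ≤ C2 * ‖zy - y'‖ := hC2def ▸ steadyState_dist_le (D := D) hσs hA2 hz (hsr x').1
    have hs' : k1 * s ^ 2 ≤ k1 * s := by gcongr; exact pow_le_of_le_one hs hs1 two_ne_zero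
    calc α ≤ ‖zx - xsr x'‖ + ‖zx - xsr x‖ + ‖xsr x - x‖ := by
          rw [hα, e]
          refine (norm_add₃_le).trans ?_
          rw [norm_neg]
      _ ≤ C2 * ‖zy - y'‖ + k1 * s + c * s := by
          gcongr
          exact hzx.trans hs'
      _ = _ := by ring
  have hαsq : α ^ 2 ≤ k5 * s ^ 2 + k5 * (s * α) := by
    have h1 : α ^ 2 ≤ (C2 * ‖zy - y'‖ + (k1 + c) * s) ^ 2 := by gcongr
    have h2 := mul_le_mul_of_nonneg_left hysq (by positivity : 0 ≤ 2 * C2 ^ 2)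
    have h3 : 0 ≤ 2 * (k1 + c) ^ 2 * (s * α) := by positivity
    have h4 : k5 * s ^ 2 + k5 * (s * α) = 2 * C2 ^ 2 * (k4 * (s ^ 2 + s * α)) +
        2 * (k1 + c) ^ 2 * s ^ 2 + 2 * (k1 + c) ^ 2 * (s * α) := by
      rw [hk5def]; ring
    have h5 := add_sq_le (a := C2 * ‖zy - y'‖) (b := (k1 + c) * s)
    rw [mul_pow, mul_pow] at h5
    linarith only [h1, h2, h3, h4, h5]
  have hαs : α ≤ (k5 + 1) * s := le_mul_of_sq_le_add hk5.le hs hα0 hαsq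
  have hβs : β ≤ k7 * s ^ 2 := by
    refine hβle.trans ?_
    calc _ ≤ C4 * c * (c * s ^ 2 + s * ((k5 + 1) * s)) := by gcongr
      _ = _ := by rw [hk7def]; ring
  refine hcost.trans (add_le_add le_rfl ?_)
  calc _ ≤ Λ * (κ * j + k7 * s ^ 2) * (k7 * s ^ 2) := by gcongr
    _ ≤ Λ * ((κ + k7) * (s + j)) * (k7 * s ^ 2) := by
        gcongr
        have : s ^ 2 ≤ s := pow_le_of_le_one hs hs1 two_ne_zero
        have := mul_le_mul_of_nonneg_left this hk7.le
        linarith only [this, mul_nonneg hκ.le hs, mul_nonneg hk7.le hj]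
    _ = _ := by ring


theorem qn_nonneg {k : ℕ} {P : Matrix (Fin k) (Fin k) ℝ} (hP : P.PosDef) (x : Fin k → ℝ) :
    0 ≤ qn P x := by
  obtain ⟨c, hc, h⟩ := exists_qn_lower hP
  exact (by positivity : 0 ≤ c * ‖x‖ ^ 2).trans (h x)

theorem exists_ball_subset {m : ℕ} {U Us : Set (Fin m → ℝ)} (hUs : IsCompact Us)
    (hUsint : Us ⊆ interior U) : ∃ ε : ℝ, 0 < ε ∧ ∀ u ∈ Us, ∀ v, ‖v - u‖ ≤ ε → v ∈ U := by
  obtain ⟨ε, hε, h⟩ := hUs.exists_cthickening_subset_open isOpen_interior hUsint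
  refine ⟨ε, hε, fun u hu v hv => interior_subset (h ?_)⟩
  exact Metric.mem_cthickening_of_dist_le v u ε Us hu (by rwa [dist_eq_norm])

theorem sum_range_shift {n N : ℕ} (hN : n ≤ N) (l a : ℕ → ℝ)
    (h : ∀ k < N, a k = if k + n < N then l (k + n) else 0) :
    ∑ k ∈ Finset.range N, a k = ∑ k ∈ Finset.range N, l k - ∑ k ∈ Finset.range n, l k := by
  obtain ⟨M, rfl⟩ := Nat.exists_eq_add_of_le hN
  rw [Finset.sum_congr rfl fun k hk => h k (Finset.mem_range.1 hk),
    Finset.sum_range_add l n M, add_sub_cancel_left, add_comm n M, Finset.sum_range_add _ M n]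
  have h1 : ∑ k ∈ Finset.range n, (if M + k + n < M + n then l (M + k + n) else 0) = 0 :=
    Finset.sum_eq_zero fun k _ => if_neg (by omega)
  rw [h1, add_zero]
  refine Finset.sum_congr rfl fun k hk => ?_
  have := Finset.mem_range.1 hk
  rw [if_pos (by omega), add_comm]

theorem Jeqlin_eq {n m p : ℕ} {f0 : (Fin n → ℝ) → Fin n → ℝ} {h0 : (Fin n → ℝ) → Fin p → ℝ}
    {B : Matrix (Fin n) (Fin m) ℝ} {D : Matrix (Fin p) (Fin m) ℝ} {Us : Set (Fin m → ℝ)}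
    {S : Matrix (Fin p) (Fin p) ℝ} {yr : Fin p → ℝ} {xt xsr : Fin n → ℝ} {usr : Fin m → ℝ}
    (h : (xsr, usr) ∈ Zlin f0 B Us xt ∧ ∀ z ∈ Zlin f0 B Us xt,
      qn S (hlin h0 D xt xsr usr - yr) ≤ qn S (hlin h0 D xt z.1 z.2 - yr)) :
    Jeqlin f0 h0 B D Us S yr xt = qn S (hlin h0 D xt xsr usr - yr) := by
  refine IsLeast.csInf_eq ⟨⟨_, h.1, rfl⟩, ?_⟩
  rintro _ ⟨z, hz, rfl⟩
  exact h.2 z hz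

section MPC

variable {n m p N : ℕ} {f0 : (Fin n → ℝ) → Fin n → ℝ} {h0 : (Fin n → ℝ) → Fin p → ℝ}
  {B : Matrix (Fin n) (Fin m) ℝ} {D : Matrix (Fin p) (Fin m) ℝ} {U Us : Set (Fin m → ℝ)}
  {Q : Matrix (Fin n) (Fin n) ℝ} {R : Matrix (Fin m) (Fin m) ℝ} {S : Matrix (Fin p) (Fin p) ℝ}

theorem Jstar_le {yr : Fin p → ℝ} (hQ : Q.PosDef) (hR : R.PosDef) (hS : S.PosDef)
    {xt : Fin n → ℝ} {xb : ℕ → Fin n → ℝ} {ub : ℕ → Fin m → ℝ} {xs : Fin n → ℝ} {us : Fin m → ℝ}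
    {ys : Fin p → ℝ} (h : MPCfeas f0 h0 B D U Us N xt xb ub xs us ys) :
    Jstar f0 h0 B D U Us Q R S yr N xt ≤ MPCcost Q R S yr N xb ub xs us ys := by
  refine csInf_le ⟨0, ?_⟩ ⟨xb, ub, xs, us, ys, h, rfl⟩
  rintro _ ⟨xb, ub, xs, us, ys, -, rfl⟩
  exact add_nonneg (Finset.sum_nonneg fun _ _ => add_nonneg (qn_nonneg hQ _) (qn_nonneg hR _))
    (qn_nonneg hS _)

theorem Jstar_eq {yr : Fin p → ℝ} {xt : Fin n → ℝ} {xb : ℕ → Fin n → ℝ} {ub : ℕ → Fin m → ℝ}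
    {xs : Fin n → ℝ} {us : Fin m → ℝ} {ys : Fin p → ℝ}
    (h : MPCopt f0 h0 B D U Us Q R S yr N xt xb ub xs us ys) :
    Jstar f0 h0 B D U Us Q R S yr N xt = MPCcost Q R S yr N xb ub xs us ys := by
  refine IsLeast.csInf_eq ⟨⟨xb, ub, xs, us, ys, h.1, rfl⟩, ?_⟩
  rintro _ ⟨xb', ub', xs', us', ys', h', rfl⟩
  exact h.2 _ _ _ _ _ h'

theorem exists_MPCfeas_near (hN : n ≤ N) (hf0 : ContDiff ℝ 2 f0) {μ : ℝ} (hμ : 0 < μ)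
    (hA3 : A3holds f0 B μ) (r : ℝ) :
    ∃ C : ℝ, 0 < C ∧ ∀ (x : Fin n → ℝ) (z : ℕ → Fin n → ℝ) (v : ℕ → Fin m → ℝ) (xs : Fin n → ℝ)
      (us : Fin m → ℝ) (η : ℝ), ‖x‖ ≤ r → (xs, us) ∈ Zlin f0 B Us x → ‖x - z 0‖ ≤ η →
      (∀ k < N, ‖flin f0 B x (z k) (v k) - z (k + 1)‖ ≤ η) → ‖xs - z N‖ ≤ η →
      (∀ k < N, ∀ u, ‖u - v k‖ ≤ C * η → u ∈ U) →
      ∃ xb ub, MPCfeas f0 h0 B D U Us N x xb ub xs us (hlin h0 D x xs us) ∧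
        (∀ k ≤ N, ‖xb k - z k‖ ≤ C * η) ∧ ∀ k < N, ‖ub k - v k‖ ≤ C * η := by
  obtain ⟨L, hL, hLb, -⟩ := exists_taylor_bound hf0 r
  obtain ⟨C, hC, h⟩ := exists_steering hN B hμ hL.le
  refine ⟨C, hC, fun x z v xs us η hx hz h1 h2 h3 hU => ?_⟩
  obtain ⟨xb, ub, hx0, hxN, hstep, hxd, hud⟩ := h (jac f0 x)
    (fun w => by rw [jac_mulVec]; exact hLb x hx w) (hA3 x) _ x xs z v η h1 h2 h3
  exact ⟨xb, ub, ⟨hstep, hx0, hxN, fun k hk => hU k hk _ (hud k hk), hz, rfl⟩, hxd, hud⟩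

theorem exists_Jstar_le_quadratic (hN : n ≤ N) (hf0 : ContDiff ℝ 2 f0) {μ : ℝ} (hμ : 0 < μ)
    (hA3 : A3holds f0 B μ) (hUs : IsCompact Us) (hUsint : Us ⊆ interior U) (hQ : Q.PosDef)
    (hR : R.PosDef) (hS : S.PosDef) (yr : Fin p → ℝ) (r : ℝ) :
    ∃ C δ : ℝ, 0 < C ∧ 0 < δ ∧ ∀ (x xs : Fin n → ℝ) (us : Fin m → ℝ), ‖x‖ ≤ r →
      (xs, us) ∈ Zlin f0 B Us x → ‖x - xs‖ ≤ δ →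
      Jstar f0 h0 B D U Us Q R S yr N x ≤
        qn S (hlin h0 D x xs us - yr) + C * ‖x - xs‖ ^ 2 := by
  obtain ⟨C, hC, h⟩ := exists_MPCfeas_near (h0 := h0) (D := D) (U := U) (Us := Us) hN hf0 hμ hA3 r
  obtain ⟨ε, hε, hball⟩ := exists_ball_subset hUs hUsint
  obtain ⟨a, ha, hQup⟩ := exists_qn_add_le Q
  obtain ⟨b, hb, hRup⟩ := exists_qn_add_le R
  refine ⟨N * ((a + b) * C ^ 2) + 1, ε / C, by positivity, by positivity,
    fun x xs us hx hz hd => ?_⟩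
  have hCε : C * ‖x - xs‖ ≤ ε := by
    rw [le_div_iff₀ hC] at hd
    linarith
  obtain ⟨xb, ub, hfeas, hxb, hub⟩ := h x (fun _ => xs) (fun _ => us) xs us ‖x - xs‖ hx hz le_rfl
    (fun k _ => by
      have : xs = flin f0 B x xs us := hz.2
      simp [← this])
    (by simp) (fun k _ u hu => hball us hz.1 u (hu.trans hCε))
  refine (Jstar_le hQ hR hS hfeas).trans ?_
  have hsum : ∑ k ∈ Finset.range N, (qn Q (xb k - xs) + qn R (ub k - us)) ≤
      N * ((a + b) * C ^ 2 * ‖x - xs‖ ^ 2) := by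
    have := Finset.sum_le_card_nsmul (Finset.range N)
      (fun k => qn Q (xb k - xs) + qn R (ub k - us)) ((a + b) * C ^ 2 * ‖x - xs‖ ^ 2)
      (fun k hk => ?_)
    · simpa using this
    have hk := Finset.mem_range.1 hk
    have h1 := hQup 0 (xb k - xs)
    have h2 := hRup 0 (ub k - us)
    have hq0 : qn Q 0 = 0 := by simp [qn]
    have hr0 : qn R 0 = 0 := by simp [qn]
    rw [zero_add, norm_zero, zero_add, hq0, zero_add] at h1
    rw [zero_add, norm_zero, zero_add, hr0, zero_add] at h2
    calc _ ≤ a * (C * ‖x - xs‖) * (C * ‖x - xs‖) + b * (C * ‖x - xs‖) * (C * ‖x - xs‖) := by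
          refine add_le_add (h1.trans ?_) (h2.trans ?_)
          · have := hxb k hk.le
            gcongr
          · have := hub k hk
            gcongr
      _ = _ := by ring
  rw [MPCcost]
  linarith [sq_nonneg ‖x - xs‖]

theorem exists_Jstar_shift_le (hN : n ≤ N) (hf0 : ContDiff ℝ 2 f0) (hh0 : ContDiff ℝ 2 h0)
    {μ : ℝ} (hμ : 0 < μ) (hA3 : A3holds f0 B μ) {σl : ℝ} (hσl : 0 < σl) (hA4 : A4holds f0 σl)
    (hUs : IsCompact Us) (hUsint : Us ⊆ interior U) (hQ : Q.PosDef) (hR : R.PosDef)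
    (hS : S.PosDef) (yr : Fin p → ℝ) (r : ℝ) {c : ℝ} (hc : 0 < c) :
    ∃ C δ : ℝ, 0 < C ∧ 0 < δ ∧ ∀ (xt x' : Fin n → ℝ) (xb : ℕ → Fin n → ℝ) (ub : ℕ → Fin m → ℝ)
      (xs : Fin n → ℝ) (us : Fin m → ℝ) (ys : Fin p → ℝ) (s j : ℝ),
      0 ≤ s → s ≤ 1 → s ≤ δ → 0 ≤ j → ‖xt‖ ≤ r → ‖x'‖ ≤ r → ‖x' - xt‖ ≤ c * s →
      MPCfeas f0 h0 B D U Us N xt xb ub xs us ys → (∀ k ≤ N, ‖xb k - xs‖ ≤ c * s) →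
      (∀ k < N, ‖ub k - us‖ ≤ c * s) → ‖x' - xb n‖ ≤ c * s ^ 2 → ‖ys - yr‖ ≤ c * (s + j) →
      MPCfeasible f0 h0 B D U Us N x' ∧
      Jstar f0 h0 B D U Us Q R S yr N x' ≤
        ∑ k ∈ Finset.range N, (qn Q (xb k - xs) + qn R (ub k - us)) -
          ∑ k ∈ Finset.range n, (qn Q (xb k - xs) + qn R (ub k - us)) +
          qn S (ys - yr) + C * (s + j) * s ^ 2 := by
  obtain ⟨L, hL, -, hT⟩ := exists_taylor_bound hf0 r
  obtain ⟨C4, hC4, hss⟩ := exists_steadyState_transfer hf0 hh0 B D Us hσl hA4 r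
  obtain ⟨C5, hC5, hnear⟩ :=
    exists_MPCfeas_near (h0 := h0) (D := D) (U := U) (Us := Us) hN hf0 hμ hA3 r
  obtain ⟨ε, hε, hball⟩ := exists_ball_subset hUs hUsint
  obtain ⟨ΛQ, hΛQ, hQup⟩ := exists_qn_add_le Q
  obtain ⟨ΛR, hΛR, hRup⟩ := exists_qn_add_le R
  obtain ⟨ΛS, hΛS, hSup⟩ := exists_qn_add_le S
  obtain ⟨e, hedef⟩ : ∃ t : ℝ, t = c + 4 * L * c ^ 2 + 3 * C4 * c ^ 2 := ⟨_, rfl⟩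
  have he : 0 < e := by rw [hedef]; positivity
  obtain ⟨d, hddef⟩ : ∃ t : ℝ, t = C5 * e := ⟨_, rfl⟩
  have hd : 0 < d := by rw [hddef]; positivity
  obtain ⟨g, hgdef⟩ : ∃ t : ℝ, t = (ΛQ + ΛR) * (c + (d + e)) * (d + e) := ⟨_, rfl⟩
  have hg : 0 < g := by rw [hgdef]; positivity
  refine ⟨N * g + ΛS * (c + e) * e, ε / (d + c), by positivity, by positivity, ?_⟩
  intro xt x' xb ub xs us ys s j hs hs1 hsδ hj hxt hx' hxx hfeas hxb hub hxn hys
  obtain ⟨hstep, hx0, hxN, hUk, hz, hyseq⟩ := hfeas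
  have hss2 : s ^ 2 ≤ s := pow_le_of_le_one hs hs1 two_ne_zero
  have hcs : 0 ≤ c * s := by positivity
  have hxst : ‖xs - xt‖ ≤ c * s := by
    rw [norm_sub_rev, ← hx0]
    exact hxb 0 (Nat.zero_le _)
  have hxs' : ‖xs - x'‖ ≤ 2 * c * s := by
    have : xs - x' = (xs - xt) - (x' - xt) := by abel
    rw [this]
    refine (norm_sub_le _ _).trans ?_
    linarith
  obtain ⟨xs', hz', hxsd, hysd⟩ := hss xt x' xs us hxt hx' hz
  rw [← hyseq] at hysd
  have hse : C4 * (‖x' - xt‖ * (‖x' - xt‖ + ‖xs - x'‖)) ≤ e * s ^ 2 := by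
    calc _ ≤ C4 * ((c * s) * (c * s + 2 * c * s)) := by gcongr
      _ = 3 * C4 * c ^ 2 * s ^ 2 := by ring
      _ ≤ _ := by
        gcongr
        rw [hedef]
        exact le_add_of_nonneg_left (by positivity)
  replace hxsd := hxsd.trans hse
  replace hysd := hysd.trans hse
  obtain ⟨z, hzdef⟩ : ∃ z : ℕ → Fin n → ℝ, z = fun k => if k + n ≤ N then xb (k + n) else xs :=
    ⟨_, rfl⟩
  obtain ⟨v, hvdef⟩ : ∃ v : ℕ → Fin m → ℝ, v = fun k => if k + n < N then ub (k + n) else us :=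
    ⟨_, rfl⟩
  have hz_late : ∀ k, N ≤ k + n → z k = xs := fun k hk => by
    rcases hk.eq_or_lt with h | h
    · rw [hzdef, ← hxN]
      simp [h]
    · rw [hzdef]
      exact if_neg (by omega)
  have hz_early : ∀ k, k + n ≤ N → z k = xb (k + n) := fun k hk => by
    rw [hzdef]
    exact if_pos hk
  have hv_late : ∀ k, N ≤ k + n → v k = us := fun k hk => by
    rw [hvdef]
    exact if_neg (by omega)
  have hv_early : ∀ k, k + n < N → v k = ub (k + n) := fun k hk => by
    rw [hvdef]
    exact if_pos hk
  have hzs : ∀ k, ‖z k - xs‖ ≤ c * s := fun k => by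
    rcases le_total N (k + n) with h | h
    · rwa [hz_late k h, sub_self, norm_zero]
    · rw [hz_early k h]
      exact hxb _ h
  have hvs : ∀ k, ‖v k - us‖ ≤ c * s := fun k => by
    rcases le_or_gt N (k + n) with h | h
    · rwa [hv_late k h, sub_self, norm_zero]
    · rw [hv_early k h]
      exact hub _ h
  have hzstep : ∀ k, flin f0 B xt (z k) (v k) = z (k + 1) := fun k => by
    rcases le_or_gt N (k + n) with h | h
    · rw [hz_late k h, hv_late k h, hz_late (k + 1) (by omega)]
      exact hz.2.symm
    · rw [hz_early k h.le, hv_early k h, hz_early (k + 1) (by omega), ← hstep _ h]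
      congr 1
      omega
  have hdefect : ∀ k, ‖flin f0 B x' (z k) (v k) - z (k + 1)‖ ≤ e * s ^ 2 := fun k => by
    rw [← hzstep k, flin_eq, flin_eq, add_sub_add_right_eq_sub]
    refine (hT xt x' (z k) hxt hx').trans ?_
    have h1 : ‖z k - x'‖ ≤ 3 * c * s := by
      have : z k - x' = (z k - xs) + (xs - x') := by abel
      rw [this]
      refine (norm_add_le _ _).trans ?_
      linarith [hzs k]
    calc _ ≤ L * (c * s) * (c * s + 3 * c * s) := by gcongr
      _ = 4 * L * c ^ 2 * s ^ 2 := by ring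
      _ ≤ _ := by
        gcongr
        rw [hedef]
        linarith only [hc, (by positivity : 0 ≤ 3 * C4 * c ^ 2)]
  obtain ⟨ζ, υ, hfeas', hζ, hυ⟩ := hnear x' z v xs' us (e * s ^ 2) hx' hz'
    (by
      rw [hz_early 0 (by omega), zero_add]
      refine hxn.trans ?_
      gcongr
      rw [hedef, add_assoc]
      exact le_add_of_nonneg_right (by positivity))
    (fun k _ => hdefect k) (by rwa [hz_late N (by omega)])
    (fun k _ u hu => hball us hz.1 u (by
      have h1 : u - us = (u - v k) + (v k - us) := by abel
      rw [h1]
      refine (norm_add_le _ _).trans ((add_le_add hu (hvs k)).trans ?_)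
      rw [le_div_iff₀ (by positivity)] at hsδ
      have h2 : C5 * (e * s ^ 2) ≤ d * s := by
        rw [hddef, ← mul_assoc]
        gcongr
      linarith only [h2, hsδ]))
  rw [← mul_assoc, ← hddef] at hζ hυ
  refine ⟨⟨_, _, _, _, _, hfeas'⟩, (Jstar_le hQ hR hS hfeas').trans ?_⟩
  have hde : 0 < d + e := by positivity
  have hterm : ∀ k < N, qn Q (ζ k - xs') + qn R (υ k - us) ≤
      (qn Q (z k - xs) + qn R (v k - us)) + g * s * s ^ 2 := fun k hk => by
    have h1 : ‖(ζ k - z k) - (xs' - xs)‖ ≤ (d + e) * s ^ 2 := by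
      refine (norm_sub_le _ _).trans ?_
      linarith only [hζ k hk.le, hxsd]
    have h2 : ‖υ k - v k‖ ≤ (d + e) * s ^ 2 := by
      linarith only [hυ k hk, (by positivity : 0 ≤ e * s ^ 2)]
    have h3 : ζ k - xs' = (z k - xs) + ((ζ k - z k) - (xs' - xs)) := by abel
    have h4 : υ k - us = (v k - us) + (υ k - v k) := by abel
    have hzsk := hzs k
    have hvsk := hvs k
    rw [h3, h4]
    have h5 : qn Q ((z k - xs) + ((ζ k - z k) - (xs' - xs))) ≤ qn Q (z k - xs) +
        ΛQ * (c * s + (d + e) * s) * ((d + e) * s ^ 2) := by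
      refine (hQup _ _).trans (add_le_add le_rfl ?_)
      gcongr
      exact h1.trans (by gcongr)
    have h6 : qn R ((v k - us) + (υ k - v k)) ≤ qn R (v k - us) +
        ΛR * (c * s + (d + e) * s) * ((d + e) * s ^ 2) := by
      refine (hRup _ _).trans (add_le_add le_rfl ?_)
      gcongr
      exact h2.trans (by gcongr)
    have h7 : g * s * s ^ 2 = ΛQ * (c * s + (d + e) * s) * ((d + e) * s ^ 2) +
        ΛR * (c * s + (d + e) * s) * ((d + e) * s ^ 2) := by
      rw [hgdef]; ring
    linarith only [h5, h6, h7]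
  have hshift := sum_range_shift hN (fun k => qn Q (xb k - xs) + qn R (ub k - us))
    (fun k => qn Q (z k - xs) + qn R (v k - us)) (fun k _ => by
      rcases le_or_gt N (k + n) with h | h
      · rw [if_neg (by omega), hz_late k h, hv_late k h]
        simp [qn]
      · rw [if_pos h, hz_early k h.le, hv_early k h])
  have hsum := Finset.sum_le_sum fun k hk => hterm k (Finset.mem_range.1 hk)
  rw [Finset.sum_add_distrib (g := fun _ => g * s * s ^ 2), hshift, Finset.sum_const,
    Finset.card_range, nsmul_eq_mul] at hsum
  have hout : qn S (hlin h0 D x' xs' us - yr) ≤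
      qn S (ys - yr) + ΛS * (c * (s + j) + e * s) * (e * s ^ 2) := by
    have h1 : hlin h0 D x' xs' us - yr = (ys - yr) + (hlin h0 D x' xs' us - ys) := by abel
    rw [h1]
    refine (hSup _ _).trans (add_le_add le_rfl ?_)
    gcongr
    exact hysd.trans (by gcongr)
  have hout2 : ΛS * (c * (s + j) + e * s) * (e * s ^ 2) ≤
      ΛS * ((c + e) * (s + j)) * (e * s ^ 2) := by
    gcongr
    linarith only [mul_nonneg he.le hj]
  have hg2 : (N : ℝ) * (g * s * s ^ 2) ≤ N * (g * (s + j) * s ^ 2) := by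
    gcongr
    linarith only [hj]
  rw [MPCcost]
  have hfin : (N * g + ΛS * (c + e) * e) * (s + j) * s ^ 2 =
      N * (g * (s + j) * s ^ 2) + ΛS * ((c + e) * (s + j)) * (e * s ^ 2) := by ring
  linarith only [hsum, hout, hout2, hg2, hfin]

end MPC


/-- Proposition 3 (candidate 1): for every `γ₁ > 0` there exist
`V_max, J_eq^max > 0` and `c_{V,1} ∈ (0,1)` such that, whenever the tracking MPC
problem is feasible at `x_t` with `V(x_t) ≤ V_max`, `J*_{eq,lin}(x_t) ≤ J_eq^max`,
the optimal solution satisfies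
`Σ_{k<n}(‖x̄*_k − xˢ*‖₂² + ‖ū*_k − uˢ*‖₂²) ≥ γ₁‖xˢ* − xˢʳ_lin(x_t)‖₂²`, and
`J*_{eq,lin}(x_{t+n}) ≤ J_eq^max` for the `n`-step nonlinear successor state
`x_{t+n}`, the problem is feasible at `x_{t+n}` and
`V(x_{t+n}) ≤ c_{V,1} V(x_t)`. -/
theorem stmt2 {n m p : ℕ} (N : ℕ) (hN : n ≤ N)
    (f0 : (Fin n → ℝ) → Fin n → ℝ) (h0 : (Fin n → ℝ) → Fin p → ℝ)
    (B : Matrix (Fin n) (Fin m) ℝ) (D : Matrix (Fin p) (Fin m) ℝ)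
    (U Us : Set (Fin m → ℝ)) (yr : Fin p → ℝ)
    (Q : Matrix (Fin n) (Fin n) ℝ) (R : Matrix (Fin m) (Fin m) ℝ)
    (S : Matrix (Fin p) (Fin p) ℝ)
    (hU : IsCompact U) (hUs : IsCompact Us) (hUsconv : Convex ℝ Us)
    (hUsint : Us ⊆ interior U)
    (hQ : Q.PosDef) (hR : R.PosDef) (hS : S.PosDef)
    -- (A1)
    (hf0 : ContDiff ℝ 2 f0) (hh0 : ContDiff ℝ 2 h0)
    -- (A2)
    (σs : ℝ) (hσs : 0 < σs) (hA2 : A2holds f0 h0 B D σs)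
    -- (A3)
    (μ : ℝ) (hμ : 0 < μ) (hA3 : A3holds f0 B μ)
    -- (A4)
    (σl : ℝ) (hσl : 0 < σl) (hA4 : A4holds f0 σl)
    -- (A5)
    (𝓑 : Set ((Fin n → ℝ) × (Fin m → ℝ))) (h𝓑 : IsCompact 𝓑)
    (hA5 : ∀ xt : Fin n → ℝ, Zlin f0 B Us xt ⊆ 𝓑)
    -- optimal reachable steady state of the linearization at each point
    (xsrlin : (Fin n → ℝ) → Fin n → ℝ) (usrlin : (Fin n → ℝ) → Fin m → ℝ)
    (hxsrlin : ∀ xt : Fin n → ℝ, (xsrlin xt, usrlin xt) ∈ Zlin f0 B Us xt ∧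
      ∀ z ∈ Zlin f0 B Us xt,
        qn S (hlin h0 D xt (xsrlin xt) (usrlin xt) - yr) ≤
          qn S (hlin h0 D xt z.1 z.2 - yr)) :
    ∀ γ1 : ℝ, 0 < γ1 →
      ∃ Vmax Jeqmax cV1 : ℝ, 0 < Vmax ∧ 0 < Jeqmax ∧ 0 < cV1 ∧ cV1 < 1 ∧
        ∀ xt : Fin n → ℝ,
          MPCfeasible f0 h0 B D U Us N xt →
          Vfun f0 h0 B D U Us Q R S yr N xt ≤ Vmax →
          Jeqlin f0 h0 B D Us S yr xt ≤ Jeqmax →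
          ∀ (xb : ℕ → Fin n → ℝ) (ub : ℕ → Fin m → ℝ) (xs : Fin n → ℝ)
            (us : Fin m → ℝ) (ys : Fin p → ℝ),
            MPCopt f0 h0 B D U Us Q R S yr N xt xb ub xs us ys →
            γ1 * en (xs - xsrlin xt) ^ 2 ≤
              ∑ k ∈ Finset.range n, (en (xb k - xs) ^ 2 + en (ub k - us) ^ 2) →
            Jeqlin f0 h0 B D Us S yr (rollout f0 B xt ub n) ≤ Jeqmax →
            MPCfeasible f0 h0 B D U Us N (rollout f0 B xt ub n) ∧
            Vfun f0 h0 B D U Us Q R S yr N (rollout f0 B xt ub n) ≤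
              cV1 * Vfun f0 h0 B D U Us Q R S yr N xt := by
  intro γ1 hγ1
  obtain ⟨b, hb, hBb⟩ := h𝓑.isBounded.exists_pos_norm_le
  have hZ : ∀ xt, ∀ z ∈ Zlin f0 B Us xt, ‖z.1‖ ≤ b := fun xt z hz =>
    (norm_fst_le z).trans (hBb z (hA5 xt hz))
  obtain ⟨lQ, hlQ, hQlow⟩ := exists_qn_lower hQ
  obtain ⟨lR, hlR, hRlow⟩ := exists_qn_lower hR
  obtain ⟨lS, hlS, hSlow⟩ := exists_qn_lower hS
  obtain ⟨c1, hc1def⟩ : ∃ t : ℝ, t = (√lQ)⁻¹ + (√lR)⁻¹ := ⟨_, rfl⟩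
  have hc1 : 0 < c1 := by rw [hc1def]; positivity
  obtain ⟨c2, hc2, hroll⟩ := exists_rollout_bound hf0 B (b + 2 * c1) n
  obtain ⟨M, hMdef⟩ : ∃ t : ℝ, t = n / lQ + m / lR + 1 := ⟨_, rfl⟩
  have hM : 0 < M := by rw [hMdef]; positivity
  obtain ⟨κ, hκdef⟩ : ∃ t : ℝ, t = (√(γ1 / M))⁻¹ := ⟨_, rfl⟩
  have hκ : 0 < κ := by rw [hκdef]; positivity
  obtain ⟨κS, hκSdef⟩ : ∃ t : ℝ, t = (√lS)⁻¹ := ⟨_, rfl⟩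
  have hκS : 0 < κS := by rw [hκSdef]; positivity
  obtain ⟨r, hrdef⟩ : ∃ t : ℝ, t = b + c1 + c2 := ⟨_, rfl⟩
  obtain ⟨c, hcdef⟩ : ∃ t : ℝ, t = 2 * c1 + c2 + κ + κS := ⟨_, rfl⟩
  have hc : 0 < c := by rw [hcdef]; positivity
  obtain ⟨Ca, δa, hCa, hδa, hquad⟩ := exists_Jstar_le_quadratic (h0 := h0) (D := D) (U := U)
    (Us := Us) hN hf0 hμ hA3 hUs hUsint hQ hR hS yr r
  obtain ⟨Cb, δb, hCb, hδb, hshift⟩ := exists_Jstar_shift_le (D := D) (U := U)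
    (Us := Us) hN hf0 hh0 hμ hA3 hσl hA4 hUs hUsint hQ hR hS yr r hc
  obtain ⟨Ce, hCe, heq⟩ := exists_equilibriumCost_le hf0 hh0 B D hUsconv hS yr hσs hA2 hσl hA4
    hb hZ hxsrlin r hc
  obtain ⟨W, hWdef⟩ : ∃ t : ℝ, t = 1 + Ca * (2 * (1 / lQ + M / γ1)) := ⟨_, rfl⟩
  have hW : 1 ≤ W := by
    rw [hWdef]
    exact le_add_of_nonneg_right (by positivity)
  have hW0 : 0 < W := one_pos.trans_le hW
  obtain ⟨δ, hδdef⟩ : ∃ t : ℝ, t = min (min 1 δb) (min (δa / c) (1 / (4 * W * (Cb + Ce)))) :=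
    ⟨_, rfl⟩
  have hδ : 0 < δ := by rw [hδdef]; positivity
  have hδ1 : δ ≤ 1 := hδdef.le.trans ((min_le_left _ _).trans (min_le_left _ _))
  have hδδb : δ ≤ δb := hδdef.le.trans ((min_le_left _ _).trans (min_le_right _ _))
  have hδδa : δ ≤ δa / c := hδdef.le.trans ((min_le_right _ _).trans (min_le_left _ _))
  have hδW : δ ≤ 1 / (4 * W * (Cb + Ce)) :=
    hδdef.le.trans ((min_le_right _ _).trans (min_le_right _ _))
  refine ⟨δ ^ 2, δ ^ 2, 1 - 1 / (2 * W), by positivity, by positivity, ?_, ?_, ?_⟩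
  · rw [sub_pos, div_lt_one (by positivity)]
    linarith
  · linarith [(by positivity : 0 < 1 / (2 * W))]
  intro xt _ hVmax hJmax xb ub xs us ys hopt hγ hJmax'
  have hfeas := hopt.1
  obtain ⟨hstep, hx0, hxN, hUk, hz, hys⟩ := hopt.1
  obtain ⟨x', hx'def⟩ : ∃ t, t = rollout f0 B xt ub n := ⟨_, rfl⟩
  rw [← hx'def] at hJmax' ⊢
  simp only [Vfun, Jstar_eq hopt, MPCcost, Jeqlin_eq (hxsrlin _)] at hVmax hJmax hJmax' ⊢
  obtain ⟨T, hT⟩ : ∃ t, t = ∑ k ∈ Finset.range N, (qn Q (xb k - xs) + qn R (ub k - us)) :=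
    ⟨_, rfl⟩
  obtain ⟨H, hH⟩ : ∃ t, t = ∑ k ∈ Finset.range n, (qn Q (xb k - xs) + qn R (ub k - us)) :=
    ⟨_, rfl⟩
  obtain ⟨E, hE⟩ : ∃ t, t = qn S (ys - yr) := ⟨_, rfl⟩
  obtain ⟨J, hJ⟩ : ∃ t, t = qn S (hlin h0 D xt (xsrlin xt) (usrlin xt) - yr) := ⟨_, rfl⟩
  obtain ⟨J', hJ'⟩ : ∃ t, t = qn S (hlin h0 D x' (xsrlin x') (usrlin x') - yr) := ⟨_, rfl⟩
  have hl0 : ∀ k, 0 ≤ qn Q (xb k - xs) + qn R (ub k - us) := fun k =>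
    add_nonneg (qn_nonneg hQ _) (qn_nonneg hR _)
  have hHT : H ≤ T := by
    rw [hH, hT]
    exact Finset.sum_le_sum_of_subset_of_nonneg (Finset.range_mono hN) fun k _ _ => hl0 k
  have hH0 : 0 ≤ H := by
    rw [hH]
    exact Finset.sum_nonneg fun k _ => hl0 k
  have hJE : J ≤ E := by
    rw [hJ, hE, hys]
    exact (hxsrlin xt).2 (xs, us) hz
  rw [← hT, ← hE, ← hJ] at hVmax
  rw [← hJ] at hJmax
  rw [← hJ'] at hJmax'
  rw [← hT, ← hE, ← hJ, ← hJ']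
  have hV0 : 0 ≤ T + E - J := by linarith only [hH0, hHT, hJE]
  obtain ⟨s, hsdef⟩ : ∃ t, t = √(T + E - J) := ⟨_, rfl⟩
  have hs : 0 ≤ s := hsdef ▸ Real.sqrt_nonneg _
  have hsV : s ^ 2 = T + E - J := by rw [hsdef, Real.sq_sqrt hV0]
  have hsδ : s ≤ δ := by
    rw [hsdef]
    exact Real.sqrt_le_iff.2 ⟨hδ.le, hVmax⟩
  have hs1 : s ≤ 1 := hsδ.trans hδ1
  have hss2 : s ^ 2 ≤ s := pow_le_of_le_one hs hs1 two_ne_zero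
  have hTs : T ≤ s ^ 2 := by linarith only [hsV, hJE]
  have hterm : ∀ k < N, qn Q (xb k - xs) + qn R (ub k - us) ≤ T := fun k hk => by
    rw [hT]
    exact Finset.single_le_sum (f := fun k => qn Q (xb k - xs) + qn R (ub k - us))
      (fun k _ => hl0 k) (Finset.mem_range.2 hk)
  have hxk : ∀ k ≤ N, ‖xb k - xs‖ ≤ c1 * s := fun k hk => by
    rcases hk.lt_or_eq with hk | rfl
    · refine (le_inv_sqrt_mul_of_sq_le hlQ hs ((hQlow _).trans ?_)).trans ?_
      · linarith only [hterm k hk, qn_nonneg hR (ub k - us), hTs]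
      · gcongr
        rw [hc1def]
        exact le_add_of_nonneg_right (by positivity)
    · rw [hxN, sub_self, norm_zero]
      positivity
  have huk : ∀ k < N, ‖ub k - us‖ ≤ c1 * s := fun k hk => by
    refine (le_inv_sqrt_mul_of_sq_le hlR hs ((hRlow _).trans ?_)).trans ?_
    · linarith only [hterm k hk, qn_nonneg hQ (xb k - xs), hTs]
    · gcongr
      rw [hc1def]
      exact le_add_of_nonneg_left (by positivity)
  have hc1s : c1 * s ≤ c1 := mul_le_of_le_one_right hc1.le hs1
  have hxsb : ‖xs‖ ≤ b := hZ xt _ hz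
  have hxtxs : ‖xt - xs‖ ≤ c1 * s := hx0 ▸ hxk 0 (Nat.zero_le _)
  have hxtn : ‖xt‖ ≤ b + c1 := by
    have : xt = (xt - xs) + xs := by abel
    rw [this]
    refine (norm_add_le _ _).trans ?_
    linarith only [hxtxs, hxsb, hc1s]
  have hxkt : ∀ k ≤ N, ‖xb k - xt‖ ≤ 2 * c1 * s := fun k hk => by
    have : xb k - xt = (xb k - xs) - (xt - xs) := by abel
    rw [this]
    refine (norm_sub_le _ _).trans ?_
    linarith only [hxtxs, hxk k hk]
  have hxn := hroll s xb ub xt hs hs1 (by linarith only [hxtn, hc1]) hx0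
    (fun k hk => hstep k (hk.trans_le hN)) (fun k hk => (hxkt k (hk.trans hN)).trans (by
      gcongr
      linarith only [hb]))
  rw [← hx'def] at hxn
  have hc2s : c2 * s ^ 2 ≤ c2 * s := by gcongr
  have hc2s' : c2 * s ≤ c2 := mul_le_of_le_one_right hc2.le hs1
  have hxtr : ‖xt‖ ≤ r := by linarith only [hxtn, hrdef, hc2]
  have hx'r : ‖x'‖ ≤ r := by
    have : x' = (x' - xb n) + (xb n - xs) + xs := by abel
    rw [this]
    refine norm_add₃_le.trans ?_
    linarith only [hxn, hxk n hN, hxsb, hrdef, hc2s, hc2s', hc1s]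
  have hx'xt : ‖x' - xt‖ ≤ c * s := by
    have : x' - xt = (x' - xb n) + (xb n - xt) := by abel
    rw [this]
    refine (norm_add_le _ _).trans ?_
    rw [hcdef]
    linarith only [hxn, hxkt n hN, hc2s, mul_nonneg hκ.le hs, mul_nonneg hκS.le hs]
  have hc1c : c1 * s ≤ c * s := by
    gcongr
    linarith only [hcdef, hc1, hc2, hκ, hκS]
  have hysn : ‖ys - yr‖ ≤ c * (s + δ) := by
    have h1 : lS * ‖ys - yr‖ ^ 2 ≤ (s + δ) ^ 2 := by
      refine (hSlow _).trans ?_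
      rw [← hE]
      linarith only [hsV, hH0, hHT, hJmax, mul_nonneg hs hδ.le]
    refine (le_inv_sqrt_mul_of_sq_le hlS (by positivity) h1).trans ?_
    rw [← hκSdef]
    gcongr
    linarith only [hcdef, hc1, hc2, hκ, hκS]
  obtain ⟨hfeas', hdec⟩ := hshift xt x' xb ub xs us ys s δ hs hs1 (hsδ.trans hδδb) hδ.le hxtr hx'r
    hx'xt hfeas (fun k hk => (hxk k hk).trans hc1c) (fun k hk => (huk k hk).trans hc1c)
    (hxn.trans (by
      gcongr
      linarith only [hcdef, hc1, hκ, hκS])) hysn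
  refine ⟨hfeas', ?_⟩
  have hMH : ∑ k ∈ Finset.range n, (en (xb k - xs) ^ 2 + en (ub k - us) ^ 2) ≤ M * H := by
    rw [hH, Finset.mul_sum]
    refine Finset.sum_le_sum fun k _ => ?_
    have h1 : en (xb k - xs) ^ 2 ≤ n / lQ * qn Q (xb k - xs) := by
      refine (en_sq_le _).trans ?_
      rw [div_mul_eq_mul_div, le_div_iff₀ hlQ, mul_assoc, mul_comm (‖xb k - xs‖ ^ 2)]
      gcongr
      exact hQlow _
    have h2 : en (ub k - us) ^ 2 ≤ m / lR * qn R (ub k - us) := by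
      refine (en_sq_le _).trans ?_
      rw [div_mul_eq_mul_div, le_div_iff₀ hlR, mul_assoc, mul_comm (‖ub k - us‖ ^ 2)]
      gcongr
      exact hRlow _
    have hq := qn_nonneg hQ (xb k - xs)
    have hr := qn_nonneg hR (ub k - us)
    rw [mul_add]
    refine add_le_add (h1.trans ?_) (h2.trans ?_)
    · gcongr
      rw [hMdef, add_assoc]
      exact le_add_of_nonneg_right (by positivity)
    · gcongr
      rw [hMdef]
      linarith only [(by positivity : 0 ≤ (n : ℝ) / lQ)]
  have hsr : γ1 / M * ‖xs - xsrlin xt‖ ^ 2 ≤ H := by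
    rw [div_mul_eq_mul_div, div_le_iff₀ hM, mul_comm H]
    refine le_trans ?_ (hγ.trans hMH)
    have := norm_le_en (xs - xsrlin xt)
    gcongr
  have hsrs : ‖xs - xsrlin xt‖ ≤ κ * s := by
    rw [hκdef]
    exact le_inv_sqrt_mul_of_sq_le (by positivity) hs (hsr.trans (hHT.trans hTs))
  have hsplit : ‖xt - xsrlin xt‖ ≤ ‖xt - xs‖ + ‖xs - xsrlin xt‖ := by
    have : xt - xsrlin xt = (xt - xs) + (xs - xsrlin xt) := by abel
    rw [this]
    exact norm_add_le _ _
  have hxtsr : ‖xt - xsrlin xt‖ ≤ c * s := by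
    rw [hcdef]
    linarith only [hsplit, hxtxs, hsrs, mul_nonneg hc1.le hs, mul_nonneg hc2.le hs,
      mul_nonneg hκS.le hs]
  have hcδa : c * s ≤ δa := by
    rw [le_div_iff₀ hc] at hδδa
    linarith only [hδδa, mul_le_mul_of_nonneg_left hsδ hc.le]
  have hup := hquad xt _ _ hxtr (hxsrlin xt).1 (hxtsr.trans hcδa)
  rw [Jstar_eq hopt, MPCcost, ← hT, ← hE, ← hJ] at hup
  have hxtH : lQ * ‖xt - xs‖ ^ 2 ≤ H := by
    rcases Nat.eq_zero_or_pos n with h | h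
    · subst h
      rw [Subsingleton.elim (xt - xs) 0, norm_zero]
      simpa using hH0
    · refine (hQlow _).trans ?_
      have h1 : qn Q (xb 0 - xs) + qn R (ub 0 - us) ≤ H := by
        rw [hH]
        exact Finset.single_le_sum (f := fun k => qn Q (xb k - xs) + qn R (ub k - us))
          (fun k _ => hl0 k) (Finset.mem_range.2 h)
      rw [hx0] at h1
      linarith only [h1, qn_nonneg hR (ub 0 - us)]
  have hVH : s ^ 2 ≤ W * H := by
    have h1 : ‖xt - xs‖ ^ 2 ≤ 1 / lQ * H := by
      rw [one_div_mul_eq_div, le_div_iff₀ hlQ]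
      linarith only [hxtH]
    have h2 : ‖xs - xsrlin xt‖ ^ 2 ≤ M / γ1 * H := by
      rw [div_mul_eq_mul_div, div_le_iff₀ hM] at hsr
      rw [div_mul_eq_mul_div, le_div_iff₀ hγ1]
      linarith only [hsr]
    have h3 : ‖xt - xsrlin xt‖ ^ 2 ≤ 2 * (1 / lQ + M / γ1) * H := by
      refine (pow_le_pow_left₀ (norm_nonneg _) hsplit 2).trans (add_sq_le.trans ?_)
      linarith only [h1, h2]
    have h4 := mul_le_mul_of_nonneg_left h3 hCa.le
    rw [hWdef]
    linarith only [h4, hup, hsV, hH0]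
  have hJJ := heq xt x' s δ hs hs1 hδ.le hδ1 hxtr hx'r hx'xt (by rwa [norm_sub_rev])
    (by rwa [← hJ]) (by rwa [← hJ'])
  rw [← hJ, ← hJ'] at hJJ
  rw [← hT, ← hH, ← hE] at hdec
  have hsmall : (Cb + Ce) * (s + δ) * s ^ 2 ≤ 1 / (2 * W) * s ^ 2 := by
    gcongr
    have h1 : (Cb + Ce) * δ ≤ 1 / (4 * W) := by
      rw [le_div_iff₀ (by positivity)] at hδW ⊢
      linarith only [hδW]
    have h2 : (Cb + Ce) * s ≤ (Cb + Ce) * δ := by gcongr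
    have h3 : 1 / (2 * W) = 1 / (4 * W) + 1 / (4 * W) := by
      field_simp
      norm_num
    rw [mul_add, h3]
    linarith only [h1, h2]
  have hHlow : 1 / W * s ^ 2 ≤ H := by
    rw [one_div_mul_eq_div, div_le_iff₀ hW0]
    linarith only [hVH]
  have h2W : 1 / W * s ^ 2 = 1 / (2 * W) * s ^ 2 + 1 / (2 * W) * s ^ 2 := by
    field_simp
    norm_num
  rw [← hsV]
  linarith only [hdec, hJJ, hsmall, hHlow, h2W, hsV]
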